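/- Let N ≥ 2 and 0 < R₀ < R₁. Suppose Λ₁ : ℝ → ℝ is a function such that for every s ∈ [0, R₁ − R₀), λ₁(p, Ω_s) → Λ₁(s) as p → 1⁺. Then Λ₁ is continuous on [0, R₁ − R₀), Λ₁ is decreasing on [0, R₁ − R₀) (i.e. Λ₁(s₂) ≤ Λ₁(s₁) whenever 0 ≤ s₁ ≤ s₂ < R₁ − R₀), and there exists s* ∈ [0, R₁ − R₀) such that Λ₁(0) = Λ₁(s*) and Λ₁(s*) > Λ₁(s) for all s ∈ (s*, R₁ − R₀). -/

import Mathlib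

open MeasureTheory Metric Set Filter
open scoped RealInnerProductSpace ENNReal Topology

/-- The first Dirichlet eigenvalue of the p-Laplacian on `Ω`, defined variationally as the
infimum of Rayleigh quotients of smooth, not identically zero functions with compact
support contained in `Ω`. -/
noncomputable def lam1 {N : ℕ} (p : ℝ) (Ω : Set (EuclideanSpace ℝ (Fin N))) : ℝ :=
  sInf { r : ℝ | ∃ u : EuclideanSpace ℝ (Fin N) → ℝ,
    ContDiff ℝ (⊤ : ℕ∞) u ∧ u ≠ 0 ∧ HasCompactSupport u ∧ tsupport u ⊆ Ω ∧
    r = (∫ x in Ω, ‖gradient u x‖ ^ p) / (∫ x in Ω, |u x| ^ p) }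

/-- The first standard basis vector `e₁` of `ℝ^N`. -/
noncomputable def e1 (N : ℕ) : EuclideanSpace ℝ (Fin N) :=
  (WithLp.equiv 2 (Fin N → ℝ)).symm (fun i => if (i : ℕ) = 0 then 1 else 0)

/-- The eccentric annulus `Ω_s = B_{R₁}(0) \ closure (B_{R₀}(s e₁))`. -/
noncomputable def Om (N : ℕ) (R₀ R₁ s : ℝ) : Set (EuclideanSpace ℝ (Fin N)) :=
  ball 0 R₁ \ closure (ball (s • e1 N) R₀)

/-- `u` is a first eigenfunction of the p-Laplacian on `Ω` with eigenvalue `lam`: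
C¹ on an open set containing the closure of `Ω`, positive in `Ω`, zero on `∂Ω`, and a weak
solution of `−Δ_p u = lam · u^{p−1}`. -/
def IsFirstEigenfunction {N : ℕ} (p : ℝ) (Ω : Set (EuclideanSpace ℝ (Fin N)))
    (lam : ℝ) (u : EuclideanSpace ℝ (Fin N) → ℝ) : Prop :=
  (∃ V : Set (EuclideanSpace ℝ (Fin N)), IsOpen V ∧ closure Ω ⊆ V ∧ ContDiffOn ℝ 1 u V) ∧
  (∀ x ∈ Ω, 0 < u x) ∧
  (∀ x ∈ frontier Ω, u x = 0) ∧
  (∀ φ : EuclideanSpace ℝ (Fin N) → ℝ, ContDiff ℝ (⊤ : ℕ∞) φ → HasCompactSupport φ →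
    tsupport φ ⊆ Ω →
    ∫ x in Ω, ‖gradient u x‖ ^ (p - 2) * ⟪gradient u x, gradient φ x⟫ =
      lam * ∫ x in Ω, (u x) ^ (p - 1) * φ x)


open MeasureTheory Metric Set Filter
open scoped RealInnerProductSpace ENNReal Topology

abbrev EE (N : ℕ) := EuclideanSpace ℝ (Fin N)

lemma norm_gradient_eq {N : ℕ} (u : EE N → ℝ) (x : EE N) : ‖gradient u x‖ = ‖fderiv ℝ u x‖ := by
  unfold gradient
  simp

lemma fderiv_zero_of_notMem {N : ℕ} {u : EE N → ℝ} {x : EE N} (hx : x ∉ tsupport u) :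
    fderiv ℝ u x = 0 := by
  by_contra h
  exact hx (support_fderiv_subset ℝ h)

/-- Young's inequality in tangent line form. -/
lemma young_tangent {a b p : ℝ} (ha : 0 ≤ a) (hb : 0 ≤ b) (hp : 1 < p) :
    p * (a ^ (p - 1) * b) ≤ (p - 1) * a ^ p + b ^ p := by
  have hpos : 0 < p := by linarith
  have hq : (p / (p-1)).HolderConjugate p :=
    (Real.HolderConjugate.conjExponent hp).symm
  have h := Real.young_inequality_of_nonneg (Real.rpow_nonneg ha (p-1)) hb hq
  rw [← Real.rpow_mul ha] at h
  have hp1 : p - 1 ≠ 0 := by linarith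
  rw [mul_div_cancel₀ _ hp1] at h
  have h2 := mul_le_mul_of_nonneg_left h hpos.le
  calc _ ≤ _ := h2
    _ = _ := by field_simp

lemma setint_eq_grad {N : ℕ} {p : ℝ} (hp : 0 < p) {Ω : Set (EE N)} {u : EE N → ℝ}
    (hu : tsupport u ⊆ Ω) :
    ∫ x in Ω, ‖gradient u x‖ ^ p = ∫ x, ‖fderiv ℝ u x‖ ^ p := by
  simp_rw [norm_gradient_eq]
  apply setIntegral_eq_integral_of_forall_compl_eq_zero
  intro x hx
  rw [fderiv_zero_of_notMem (fun h => hx (hu h))]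
  simp [hp.ne']

lemma setint_eq_u {N : ℕ} {p : ℝ} (hp : 0 < p) {Ω : Set (EE N)} {u : EE N → ℝ}
    (hu : tsupport u ⊆ Ω) :
    ∫ x in Ω, |u x| ^ p = ∫ x, |u x| ^ p := by
  apply setIntegral_eq_integral_of_forall_compl_eq_zero
  intro x hx
  rw [image_eq_zero_of_notMem_tsupport (fun h => hx (hu h))]
  simp [hp.ne']

lemma int_pow_nonneg {N : ℕ} {p : ℝ} (u : EE N → ℝ) : 0 ≤ ∫ x, |u x| ^ p :=
  integral_nonneg fun _ => Real.rpow_nonneg (abs_nonneg _) _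

lemma int_grad_nonneg {N : ℕ} {p : ℝ} (u : EE N → ℝ) : 0 ≤ ∫ x, ‖fderiv ℝ u x‖ ^ p :=
  integral_nonneg fun _ => Real.rpow_nonneg (norm_nonneg _) _

lemma integrable_pow {N : ℕ} {p : ℝ} (hp : 0 < p) {u : EE N → ℝ} (hu : Continuous u)
    (hc : HasCompactSupport u) : Integrable (fun x => |u x| ^ p) := by
  apply Continuous.integrable_of_hasCompactSupport
  · exact (continuous_abs.comp hu).rpow_const (fun x => Or.inr hp.le)
  · exact hc.comp_left (g := fun t => |t| ^ p) (by simp [hp.ne'])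

lemma int_pow_pos {N : ℕ} {p : ℝ} (hp : 0 < p) {u : EE N → ℝ} (hu : Continuous u)
    (hc : HasCompactSupport u) (h0 : u ≠ 0) : 0 < ∫ x, |u x| ^ p := by
  obtain ⟨x, hx⟩ := Function.ne_iff.1 h0
  apply Continuous.integral_pos_of_hasCompactSupport_nonneg_nonzero (x := x)
  · exact (continuous_abs.comp hu).rpow_const (fun x => Or.inr hp.le)
  · exact hc.comp_left (g := fun t => |t| ^ p) (by simp [hp.ne'])
  · exact fun x => Real.rpow_nonneg (abs_nonneg _) _
  · exact (Real.rpow_pos_of_pos (abs_pos.2 hx) _).ne'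

lemma lam1_bdd {N : ℕ} (p : ℝ) (Ω : Set (EE N)) : BddBelow { r : ℝ | ∃ u : EuclideanSpace ℝ (Fin N) → ℝ,
    ContDiff ℝ (⊤ : ℕ∞) u ∧ u ≠ 0 ∧ HasCompactSupport u ∧ tsupport u ⊆ Ω ∧
    r = (∫ x in Ω, ‖gradient u x‖ ^ p) / (∫ x in Ω, |u x| ^ p) } := by
  refine ⟨0, ?_⟩
  rintro r ⟨u, -, -, -, -, rfl⟩
  exact div_nonneg (integral_nonneg fun _ => Real.rpow_nonneg (norm_nonneg _) _)
    (integral_nonneg fun _ => Real.rpow_nonneg (abs_nonneg _) _)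

lemma lam1_nonneg {N : ℕ} (p : ℝ) (Ω : Set (EE N)) : 0 ≤ lam1 p Ω := by
  apply Real.sInf_nonneg
  rintro r ⟨u, -, -, -, -, rfl⟩
  exact div_nonneg (integral_nonneg fun _ => Real.rpow_nonneg (norm_nonneg _) _)
    (integral_nonneg fun _ => Real.rpow_nonneg (abs_nonneg _) _)

lemma lam1_mul_le {N : ℕ} {p : ℝ} (hp : 0 < p) {Ω : Set (EE N)} {u : EE N → ℝ}
    (hs : ContDiff ℝ (⊤ : ℕ∞) u) (hc : HasCompactSupport u) (hu : tsupport u ⊆ Ω) :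
    lam1 p Ω * ∫ x, |u x| ^ p ≤ ∫ x, ‖fderiv ℝ u x‖ ^ p := by
  by_cases h0 : u = 0
  · subst h0
    simp [hp.ne']
  · have hpos := int_pow_pos hp hs.continuous hc h0
    rw [← le_div_iff₀ hpos]
    apply csInf_le (lam1_bdd p Ω)
    exact ⟨u, hs, h0, hc, hu, by rw [setint_eq_grad hp hu, setint_eq_u hp hu]⟩

lemma le_lam1 {N : ℕ} {p : ℝ} (hp : 0 < p) {Ω : Set (EE N)} (ho : IsOpen Ω) (hne : Ω.Nonempty)
    {c : ℝ} (h : ∀ u : EE N → ℝ, ContDiff ℝ (⊤ : ℕ∞) u → HasCompactSupport u → tsupport u ⊆ Ω →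
      c * ∫ x, |u x| ^ p ≤ ∫ x, ‖fderiv ℝ u x‖ ^ p) : c ≤ lam1 p Ω := by
  apply le_csInf
  · obtain ⟨x, hx⟩ := hne
    obtain ⟨f, h1, h2, h3, -, h5⟩ := exists_contDiff_tsupport_subset (n := ⊤) (ho.mem_nhds hx)
    refine ⟨_, f, h3, ?_, h2, h1, rfl⟩
    rintro rfl
    simp at h5
  · rintro r ⟨u, hs, h0, hc, hu, rfl⟩
    rw [setint_eq_grad hp hu, setint_eq_u hp hu, le_div_iff₀ (int_pow_pos hp hs.continuous hc h0)]
    exact h u hs hc hu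

lemma integrable_grad {N : ℕ} {p : ℝ} (hp : 0 < p) {u : EE N → ℝ} {C : NNReal}
    (hu : LipschitzWith C u) (hc : HasCompactSupport u) :
    Integrable (fun x => ‖fderiv ℝ u x‖ ^ p) := by
  have hm : AEStronglyMeasurable (fun x => ‖fderiv ℝ u x‖ ^ p) volume :=
    ((measurable_fderiv ℝ u).norm.pow_const p).aestronglyMeasurable
  have : (fun x => ‖fderiv ℝ u x‖ ^ p) = indicator (tsupport u) (fun x => ‖fderiv ℝ u x‖ ^ p) := by
    symm
    rw [indicator_eq_self]
    intro x hx
    by_contra h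
    apply hx
    simp [fderiv_zero_of_notMem h, hp.ne']
  rw [this, integrable_indicator_iff (isClosed_tsupport u).measurableSet]
  apply Measure.integrableOn_of_bounded (M := (C:ℝ) ^ p) hc.isCompact.measure_lt_top.ne hm
  filter_upwards with x
  rw [Real.norm_of_nonneg (Real.rpow_nonneg (norm_nonneg _) _)]
  exact Real.rpow_le_rpow (norm_nonneg _) (norm_fderiv_le_of_lipschitz ℝ hu) hp.le

lemma contDiff_lipschitz {N : ℕ} {u : EE N → ℝ} (hs : ContDiff ℝ (⊤ : ℕ∞) u)
    (hc : HasCompactSupport u) : ∃ C : NNReal, LipschitzWith C u :=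
  (hs.of_le (by exact_mod_cast le_top) : ContDiff ℝ 1 u).lipschitzWith_of_hasCompactSupport hc one_ne_zero

open MeasureTheory Metric Set Filter
open scoped RealInnerProductSpace ENNReal Topology

/-- Mollification of `u`. -/
noncomputable def moll {N : ℕ} (φ : ContDiffBump (0 : EE N)) (u : EE N → ℝ) : EE N → ℝ :=
  MeasureTheory.convolution (φ.normed volume) u (ContinuousLinearMap.lsmul ℝ ℝ) volume

lemma moll_apply {N : ℕ} (φ : ContDiffBump (0 : EE N)) (u : EE N → ℝ) (x : EE N) :
    moll φ u x = ∫ t, φ.normed volume t * u (x - t) := by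
  simp [moll, convolution_def]

lemma moll_fderiv {N : ℕ} (φ : ContDiffBump (0 : EE N)) {u : EE N → ℝ} {C : NNReal}
    (hu : LipschitzWith C u) (x : EE N) :
    ‖fderiv ℝ (moll φ u) x‖ ≤ ∫ t, φ.normed volume t * ‖fderiv ℝ u (x - t)‖ := by
  have hφc : Continuous (φ.normed (volume : Measure (EE N))) := (φ.contDiff_normed (n := 0)).continuous
  have hφi : Integrable (φ.normed (volume : Measure (EE N))) := φ.integrable_normed
  have hms : Measurable (fun t => fderiv ℝ u (x - t)) :=
    (measurable_fderiv ℝ u).comp (measurable_const.sub measurable_id)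
  have key := hasFDerivAt_integral_of_dominated_loc_of_lip (𝕜 := ℝ)
    (μ := (volume : Measure (EE N))) (F := fun y t => φ.normed volume t * u (y - t))
    (x₀ := x) (s := univ) (bound := fun t => φ.normed volume t * C)
    (F' := fun t => φ.normed volume t • fderiv ℝ u (x - t)) univ_mem
    ?_ ?_ ?_ ?_ ?_ ?_
  · have h1 : moll φ u = fun y => ∫ t, φ.normed volume t * u (y - t) := by
      ext y; exact moll_apply φ u y
    rw [h1, key.2.fderiv]
    refine (norm_integral_le_integral_norm _).trans (le_of_eq ?_)
    congr 1
    ext t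
    rw [norm_smul, Real.norm_of_nonneg (φ.nonneg_normed t)]
  · filter_upwards with y
    exact (hφc.mul (hu.continuous.comp (continuous_const.sub continuous_id))).aestronglyMeasurable
  · apply Continuous.integrable_of_hasCompactSupport
    · exact (hφc.mul (hu.continuous.comp (continuous_const.sub continuous_id)))
    · exact φ.hasCompactSupport_normed.mul_right
  · exact (hφc.measurable.smul hms).aestronglyMeasurable
  · filter_upwards with t
    rw [lipschitzOnWith_univ]
    apply LipschitzWith.of_dist_le_mul
    intro y z
    have h0 := φ.nonneg_normed (μ := volume) t
    have h2 := hu.dist_le_mul (y - t) (z - t)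
    rw [dist_sub_right, Real.dist_eq] at h2
    rw [Real.dist_eq, ← mul_sub, abs_mul, abs_of_nonneg h0, Real.coe_nnabs,
      abs_of_nonneg (mul_nonneg h0 (NNReal.coe_nonneg C)), mul_assoc]
    exact mul_le_mul_of_nonneg_left h2 h0
  · exact hφi.mul_const _
  · have hae := hu.ae_differentiableAt (μ := (volume : Measure (EE N)))
    have hae2 : ∀ᵐ t ∂(volume : Measure (EE N)), DifferentiableAt ℝ u (x - t) :=
      (Measure.measurePreserving_sub_left (volume : Measure (EE N)) x).quasiMeasurePreserving.ae hae
    filter_upwards [hae2] with t ht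
    have h3 : HasFDerivAt (fun y => u (y - t)) (fderiv ℝ u (x - t)) x := by
      have := HasFDerivAt.comp (g := u) (f := fun y : EE N => y - t) x ht.hasFDerivAt
        ((hasFDerivAt_id x).sub_const t)
      rwa [ContinuousLinearMap.comp_id] at this
    simpa using h3.const_mul (φ.normed volume t)

lemma moll_grad_int {N : ℕ} {p : ℝ} (hp : 1 < p) (φ : ContDiffBump (0 : EE N)) {u : EE N → ℝ}
    {C : NNReal} (hu : LipschitzWith C u) (hc : HasCompactSupport u) :
    ∫ x, ‖fderiv ℝ (moll φ u) x‖ ^ p ≤ ∫ x, ‖fderiv ℝ u x‖ ^ p := by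
  have hp0 : 0 < p := by linarith
  have hφc : Continuous (φ.normed (volume : Measure (EE N))) := (φ.contDiff_normed (n := 0)).continuous
  have hφi : Integrable (φ.normed (volume : Measure (EE N))) := φ.integrable_normed
  have hGi := integrable_grad hp0 hu hc
  have hms : Measurable (fun t => ‖fderiv ℝ u t‖) := (measurable_fderiv ℝ u).norm
  have hI : ∫ x, convolution (φ.normed volume) (fun x => ‖fderiv ℝ u x‖ ^ p)
      (ContinuousLinearMap.lsmul ℝ ℝ) volume x = ∫ x, ‖fderiv ℝ u x‖ ^ p := by
    rw [integral_convolution _ hφi hGi, φ.integral_normed]; simp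
  rw [← hI]
  have hIi := Integrable.integrable_convolution (ContinuousLinearMap.lsmul ℝ ℝ) hφi hGi
  apply integral_mono_of_nonneg
  · filter_upwards with x using Real.rpow_nonneg (norm_nonneg _) _
  · exact hIi
  filter_upwards with x
  simp only [convolution_def, ContinuousLinearMap.lsmul_apply, smul_eq_mul]
  set b := ∫ t, φ.normed volume t * ‖fderiv ℝ u (x - t)‖ with hb
  have hb0 : 0 ≤ b := integral_nonneg fun t => mul_nonneg (φ.nonneg_normed t) (norm_nonneg _)
  have h1 : ‖fderiv ℝ (moll φ u) x‖ ^ p ≤ b ^ p :=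
    Real.rpow_le_rpow (norm_nonneg _) (moll_fderiv φ hu x) hp0.le
  refine h1.trans ?_
  have hbd : ∀ q : ℝ, 0 < q → Integrable (fun t => φ.normed volume t * ‖fderiv ℝ u (x - t)‖ ^ q) := by
    intro q hq
    refine (hφi.mul_const ((C:ℝ)^q)).mono' ?_ ?_
    · exact (hφc.measurable.mul ((hms.comp (measurable_const.sub measurable_id)).pow_const q)).aestronglyMeasurable
    · filter_upwards with t
      have h0 := φ.nonneg_normed (μ := volume) t
      rw [Real.norm_of_nonneg (mul_nonneg h0 (Real.rpow_nonneg (norm_nonneg _) _))]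
      exact mul_le_mul_of_nonneg_left (Real.rpow_le_rpow (norm_nonneg _)
        (norm_fderiv_le_of_lipschitz ℝ hu) hq.le) h0
  have hb1 := hbd 1 one_pos
  simp only [Real.rpow_one] at hb1
  have h2 : ∫ t, (p * b ^ (p-1) * (φ.normed volume t * ‖fderiv ℝ u (x - t)‖)
      - (p - 1) * b ^ p * φ.normed volume t) ≤
      ∫ t, φ.normed volume t * ‖fderiv ℝ u (x - t)‖ ^ p := by
    apply integral_mono
    · exact (hb1.const_mul _).sub (hφi.const_mul _)
    · exact hbd p hp0
    · intro t
      have h0 := φ.nonneg_normed (μ := volume) t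
      have := mul_le_mul_of_nonneg_left (young_tangent hb0 (norm_nonneg (fderiv ℝ u (x - t))) hp) h0
      simp only
      nlinarith [this]
  rw [integral_sub (hb1.const_mul _) (hφi.const_mul _), integral_const_mul, integral_const_mul,
    φ.integral_normed, ← hb] at h2
  have h3 : b ^ (p-1) * b = b ^ p := by
    rcases hb0.eq_or_lt with h | h
    · rw [← h, Real.zero_rpow hp0.ne']; simp
    · rw [Real.rpow_sub_one h.ne']; field_simp
  calc b ^ p = p * b ^ (p-1) * b - (p - 1) * b ^ p * 1 := by rw [mul_assoc, h3]; ring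
    _ ≤ _ := h2

/-- The Rayleigh bound extends to Lipschitz test functions. -/
lemma lam1_mul_le_lip {N : ℕ} {p : ℝ} (hp : 1 < p) {Ω : Set (EE N)} (ho : IsOpen Ω) {u : EE N → ℝ}
    {C : NNReal} (hl : LipschitzWith C u) (hc : HasCompactSupport u) (hu : tsupport u ⊆ Ω) :
    lam1 p Ω * ∫ x, |u x| ^ p ≤ ∫ x, ‖fderiv ℝ u x‖ ^ p := by
  have hp0 : 0 < p := by linarith
  obtain ⟨δ, hδ, hδΩ⟩ := hc.isCompact.exists_cthickening_subset_open ho hu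
  let φ : ℕ → ContDiffBump (0 : EE N) := fun n =>
    ⟨δ / (n + 2) / 2, δ / (n + 2), by positivity, half_lt_self (by positivity)⟩
  have hr : ∀ n, (φ n).rOut = δ / (n + 2) := fun n => rfl
  have hrδ : ∀ n, (φ n).rOut ≤ δ := fun n => by
    rw [hr]; apply div_le_self hδ.le; linarith [Nat.cast_nonneg (α := ℝ) n]
  have hsub : ∀ n, Function.support (moll (φ n) u) ⊆ cthickening δ (tsupport u) := by
    intro n x hx
    have h1 := support_convolution_subset _ hx
    obtain ⟨a, ha, b, hb, rfl⟩ := Set.mem_add.1 h1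
    rw [ContDiffBump.support_normed_eq, mem_ball_zero_iff] at ha
    apply mem_cthickening_of_dist_le _ b _ _ (subset_tsupport u hb)
    rw [dist_eq_norm, add_sub_cancel_right]
    exact ha.le.trans (hrδ n)
  have htsub : ∀ n, tsupport (moll (φ n) u) ⊆ cthickening δ (tsupport u) := fun n =>
    closure_minimal (hsub n) isClosed_cthickening
  have hK : IsCompact (cthickening δ (tsupport u)) := hc.isCompact.cthickening
  have hcn : ∀ n, HasCompactSupport (moll (φ n) u) := fun n =>
    HasCompactSupport.of_support_subset_isCompact hK (hsub n)
  have hsm : ∀ n, ContDiff ℝ (⊤ : ℕ∞) (moll (φ n) u) := fun n =>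
    HasCompactSupport.contDiff_convolution_left _ (φ n).hasCompactSupport_normed
      (φ n).contDiff_normed hl.continuous.locallyIntegrable
  have hle : ∀ n, lam1 p Ω * ∫ x, |moll (φ n) u x| ^ p ≤ ∫ x, ‖fderiv ℝ u x‖ ^ p := fun n =>
    (lam1_mul_le hp0 (hsm n) (hcn n) ((htsub n).trans hδΩ)).trans (moll_grad_int hp (φ n) hl hc)
  have hclose : ∀ n x, dist (moll (φ n) u x) (u x) ≤ C * (φ n).rOut := by
    intro n x
    apply ContDiffBump.dist_normed_convolution_le hl.continuous.aestronglyMeasurable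
    intro y hy
    refine (hl.dist_le_mul y x).trans ?_
    exact mul_le_mul_of_nonneg_left (mem_ball.1 hy).le C.2
  have hrlim : Tendsto (fun n => (C : ℝ) * (φ n).rOut) atTop (𝓝 0) := by
    rw [← mul_zero (C : ℝ)]
    apply Tendsto.const_mul
    simp only [hr]
    apply Tendsto.const_div_atTop
    exact tendsto_atTop_add_const_right _ _ tendsto_natCast_atTop_atTop
  have hlim : ∀ x, Tendsto (fun n => moll (φ n) u x) atTop (𝓝 (u x)) := fun x =>
    tendsto_iff_dist_tendsto_zero.2 (squeeze_zero (fun _ => dist_nonneg) (fun n => hclose n x) hrlim)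
  obtain ⟨M, hM⟩ := hl.continuous.bounded_above_of_compact_support hc
  have hlimI : Tendsto (fun n => ∫ x, |moll (φ n) u x| ^ p) atTop (𝓝 (∫ x, |u x| ^ p)) := by
    apply tendsto_integral_of_dominated_convergence
      (indicator (cthickening δ (tsupport u)) (fun _ => (|M| + C * δ) ^ p))
    · intro n
      exact ((continuous_abs.comp (hsm n).continuous).rpow_const (fun x => Or.inr hp0.le)).aestronglyMeasurable
    · rw [integrable_indicator_iff hK.isClosed.measurableSet]
      exact integrableOn_const hK.measure_lt_top.ne
    · intro n
      filter_upwards with x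
      by_cases hx : x ∈ cthickening δ (tsupport u)
      · rw [indicator_of_mem hx, Real.norm_of_nonneg (Real.rpow_nonneg (abs_nonneg _) _)]
        apply Real.rpow_le_rpow (abs_nonneg _) _ hp0.le
        have h1 := hclose n x
        rw [Real.dist_eq] at h1
        have h2 := hM x
        rw [Real.norm_eq_abs] at h2
        have h3 : (C:ℝ) * (φ n).rOut ≤ C * δ := mul_le_mul_of_nonneg_left (hrδ n) C.2
        have h4 := abs_sub_abs_le_abs_sub (moll (φ n) u x) (u x)
        linarith [le_abs_self M]
      · rw [indicator_of_notMem hx]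
        have : moll (φ n) u x = 0 := by
          by_contra h; exact hx (hsub n h)
        simp [this, hp0.ne']
    · filter_upwards with x
      exact ((hlim x).abs).rpow_const (Or.inr hp0.le)
  exact le_of_tendsto' (hlimI.const_mul _) hle

open MeasureTheory Metric Set Filter
open scoped RealInnerProductSpace ENNReal Topology

/-- Reflection in the hyperplane `⟪e, x⟫ = a`. -/
noncomputable def sig {N : ℕ} (e : EE N) (a : ℝ) (x : EE N) : EE N :=
  (ℝ ∙ e)ᗮ.reflection x + (2 * a) • e

lemma sig_apply {N : ℕ} {e : EE N} (he : ‖e‖ = 1) (a : ℝ) (x : EE N) :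
    sig e a x = x + (2 * (a - ⟪e, x⟫)) • e := by
  unfold sig
  rw [Submodule.reflection_orthogonal_apply, Submodule.reflection_singleton_apply, he]
  have h : (2 * (a - ⟪e, x⟫)) • e = (2 * a) • e - (2 : ℕ) • (⟪e, x⟫ • e) := by
    rw [mul_sub, sub_smul, ← Nat.cast_smul_eq_nsmul ℝ, smul_smul]; norm_num
  rw [h]
  simp only [RCLike.ofReal_one, one_pow, div_one]
  abel

lemma sig_inner {N : ℕ} {e : EE N} (he : ‖e‖ = 1) (a : ℝ) (x : EE N) :
    ⟪e, sig e a x⟫ = 2 * a - ⟪e, x⟫ := by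
  rw [sig_apply he, inner_add_right, inner_smul_right, real_inner_self_eq_norm_sq, he]
  ring

lemma sig_sig {N : ℕ} {e : EE N} (he : ‖e‖ = 1) (a : ℝ) (x : EE N) :
    sig e a (sig e a x) = x := by
  rw [sig_apply he, sig_inner he, sig_apply he, add_assoc, ← add_smul]
  ring_nf
  simp

lemma sig_norm {N : ℕ} (e : EE N) (a : ℝ) (x y : EE N) :
    ‖sig e a x - sig e a y‖ = ‖x - y‖ := by
  unfold sig
  rw [add_sub_add_right_eq_sub, ← map_sub, LinearIsometryEquiv.norm_map]

lemma sig_norm_sq {N : ℕ} {e : EE N} (he : ‖e‖ = 1) (a : ℝ) (x y : EE N) :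
    ‖sig e a x - y‖ ^ 2 = ‖x - y‖ ^ 2 + 4 * (a - ⟪e, x⟫) * (a - ⟪e, y⟫) := by
  rw [sig_apply he, add_sub_right_comm, norm_add_sq_real, norm_smul, inner_smul_right, he,
    real_inner_comm e (x - y), inner_sub_right, mul_one, Real.norm_eq_abs, sq_abs]
  ring

lemma sig_norm_ge {N : ℕ} {e : EE N} (he : ‖e‖ = 1) (a : ℝ) (x y : EE N)
    (h : 0 ≤ (a - ⟪e, x⟫) * (a - ⟪e, y⟫)) : ‖x - y‖ ≤ ‖sig e a x - y‖ := by
  apply le_of_sq_le_sq _ (norm_nonneg _)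
  rw [sig_norm_sq he]; linarith

lemma sig_norm_le {N : ℕ} {e : EE N} (he : ‖e‖ = 1) (a : ℝ) (x y : EE N)
    (h : (a - ⟪e, x⟫) * (a - ⟪e, y⟫) ≤ 0) : ‖sig e a x - y‖ ≤ ‖x - y‖ := by
  apply le_of_sq_le_sq _ (norm_nonneg _)
  rw [sig_norm_sq he]; linarith

lemma sig_mp {N : ℕ} (e : EE N) (a : ℝ) : MeasurePreserving (sig e a) volume volume :=
  (measurePreserving_add_right volume _).comp (LinearIsometryEquiv.measurePreserving _)

lemma sig_cont {N : ℕ} (e : EE N) (a : ℝ) : Continuous (sig e a) :=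
  (LinearIsometryEquiv.continuous _).add continuous_const

lemma sig_emb {N : ℕ} {e : EE N} (he : ‖e‖ = 1) (a : ℝ) : MeasurableEmbedding (sig e a) :=
  (Homeomorph.mk ⟨sig e a, sig e a, sig_sig he a, sig_sig he a⟩ (sig_cont e a)
    (sig_cont e a)).measurableEmbedding

lemma sig_fderiv {N : ℕ} (e : EE N) (a : ℝ) {f : EE N → ℝ} {x : EE N}
    (hf : DifferentiableAt ℝ f (sig e a x)) :
    DifferentiableAt ℝ (fun y => f (sig e a y)) x ∧
    ‖fderiv ℝ (fun y => f (sig e a y)) x‖ = ‖fderiv ℝ f (sig e a x)‖ := by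
  have h1 : HasFDerivAt (sig e a)
      (((ℝ ∙ e)ᗮ.reflection : EE N ≃ₗᵢ[ℝ] EE N) : EE N →L[ℝ] EE N) x :=
    ((((ℝ ∙ e)ᗮ.reflection : EE N ≃ₗᵢ[ℝ] EE N) : EE N →L[ℝ] EE N).hasFDerivAt).add_const _
  have h2 := HasFDerivAt.comp (g := f) (f := sig e a) x hf.hasFDerivAt h1
  refine ⟨h2.differentiableAt, ?_⟩
  have h3 : fderiv ℝ (fun y => f (sig e a y)) x = _ := h2.fderiv
  rw [h3]
  exact ContinuousLinearMap.opNorm_comp_linearIsometryEquiv _ _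

lemma hyperplane_null {N : ℕ} {e : EE N} (he : ‖e‖ = 1) (a : ℝ) :
    ∀ᵐ x ∂(volume : Measure (EE N)), ⟪e, x⟫ ≠ a := by
  have h1 : volume {x : EE N | ⟪e, x⟫ = 0} = 0 := by
    have := Measure.addHaar_submodule (volume : Measure (EE N)) (ℝ ∙ e)ᗮ ?_
    · convert this using 2
      ext x
      simp [Submodule.mem_orthogonal_singleton_iff_inner_right]
    · intro h
      have : e ∈ (ℝ ∙ e)ᗮ := h ▸ Submodule.mem_top
      rw [Submodule.mem_orthogonal_singleton_iff_inner_right, real_inner_self_eq_norm_sq, he] at this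
      norm_num at this
  have h2 := measure_preimage_add_right (volume : Measure (EE N)) (a • e) {x : EE N | ⟪e, x⟫ = a}
  rw [ae_iff]
  simp only [not_not]
  rw [← h2, ← h1]
  congr 1
  ext x
  simp [inner_add_right, inner_smul_right, he]

lemma fderiv_eq_of_ge {N : ℕ} {f g : EE N → ℝ} {x : EE N} (h : ∀ y, g y ≤ f y) (hx : f x = g x)
    (hf : DifferentiableAt ℝ f x) (hg : DifferentiableAt ℝ g x) : fderiv ℝ f x = fderiv ℝ g x := by
  have : IsLocalMin (f - g) x := by
    filter_upwards with y
    simp [hx, h y]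
  have h0 := this.fderiv_eq_zero
  rw [fderiv_sub hf hg] at h0
  exact sub_eq_zero.1 h0

lemma fderiv_max_min {N : ℕ} {f g : EE N → ℝ} {x : EE N}
    (hf : DifferentiableAt ℝ f x) (hg : DifferentiableAt ℝ g x)
    (hM : DifferentiableAt ℝ (fun y => max (f y) (g y)) x)
    (hm : DifferentiableAt ℝ (fun y => min (f y) (g y)) x) :
    (fderiv ℝ (fun y => max (f y) (g y)) x = fderiv ℝ f x ∧
      fderiv ℝ (fun y => min (f y) (g y)) x = fderiv ℝ g x) ∨
    (fderiv ℝ (fun y => max (f y) (g y)) x = fderiv ℝ g x ∧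
      fderiv ℝ (fun y => min (f y) (g y)) x = fderiv ℝ f x) := by
  rcases lt_trichotomy (f x) (g x) with h | h | h
  · right
    have hev := hf.continuousAt.eventually_lt hg.continuousAt h
    constructor
    · apply Filter.EventuallyEq.fderiv_eq
      filter_upwards [hev] with y hy using max_eq_right hy.le
    · apply Filter.EventuallyEq.fderiv_eq
      filter_upwards [hev] with y hy using min_eq_left hy.le
  · left
    constructor
    · exact fderiv_eq_of_ge (fun y => le_max_left _ _) (by simp [h]) hM hf
    · exact (fderiv_eq_of_ge (fun y => min_le_right _ _) (by simp [h]) hg hm).symm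
  · left
    have hev := hg.continuousAt.eventually_lt hf.continuousAt h
    constructor
    · apply Filter.EventuallyEq.fderiv_eq
      filter_upwards [hev] with y hy using max_eq_left hy.le
    · apply Filter.EventuallyEq.fderiv_eq
      filter_upwards [hev] with y hy using min_eq_right hy.le

/-- Two-point rearrangement (polarization). -/
noncomputable def pol {N : ℕ} (e : EE N) (a : ℝ) (w : EE N → ℝ) (x : EE N) : ℝ :=
  if ⟪e, x⟫ ≤ a then max (w x) (w (sig e a x)) else min (w x) (w (sig e a x))

lemma pol_lip {N : ℕ} {e : EE N} (he : ‖e‖ = 1) (a : ℝ) {w : EE N → ℝ} {C : NNReal}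
    (hw : LipschitzWith C w) : LipschitzWith C (pol e a w) := by
  have hd : ∀ x y, |w x - w y| ≤ C * ‖x - y‖ := fun x y => by
    rw [← Real.dist_eq, ← dist_eq_norm]; exact hw.dist_le_mul x y
  have key : ∀ x y, ⟪e, x⟫ ≤ a → a < ⟪e, y⟫ →
      |max (w x) (w (sig e a x)) - min (w y) (w (sig e a y))| ≤ C * ‖x - y‖ := by
    intro x y hx hy
    have h1 := hd x y
    have h2 := hd (sig e a x) (sig e a y)
    rw [sig_norm] at h2
    have h0 := sig_norm_le he a x y (by nlinarith)
    have h0' := sig_norm_le he a y x (by nlinarith)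
    rw [norm_sub_rev, norm_sub_rev y] at h0'
    have h3 := (hd (sig e a x) y).trans (mul_le_mul_of_nonneg_left h0 (NNReal.coe_nonneg C))
    have h4 := (hd x (sig e a y)).trans (mul_le_mul_of_nonneg_left h0' (NNReal.coe_nonneg C))
    rcases max_choice (w x) (w (sig e a x)) with h | h <;>
    rcases min_choice (w y) (w (sig e a y)) with h' | h' <;> rw [h, h'] <;> assumption
  apply LipschitzWith.of_dist_le_mul
  intro x y
  rw [Real.dist_eq, dist_eq_norm]
  have h1 := hd x y
  have h2 := hd (sig e a x) (sig e a y)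
  rw [sig_norm] at h2
  unfold pol
  split_ifs with hx hy hy
  · exact (abs_max_sub_max_le_max _ _ _ _).trans (max_le h1 h2)
  · exact key x y hx (not_le.1 hy)
  · rw [abs_sub_comm, norm_sub_rev]; exact key y x hy (not_le.1 hx)
  · exact (abs_min_sub_min_le_max _ _ _ _).trans (max_le h1 h2)

lemma pol_left {N : ℕ} (e : EE N) (a : ℝ) (w : EE N → ℝ) {x : EE N}
    (hx : ⟪e, x⟫ < a) : pol e a w x = max (w x) (w (sig e a x)) := if_pos hx.le

lemma pol_right {N : ℕ} {e : EE N} (he : ‖e‖ = 1) (a : ℝ) (w : EE N → ℝ) {x : EE N}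
    (hx : ⟪e, x⟫ < a) : pol e a w (sig e a x) = min (w x) (w (sig e a x)) := by
  unfold pol
  rw [if_neg (by rw [sig_inner he]; linarith), sig_sig he, min_comm]

lemma pol_sum {N : ℕ} {e : EE N} (he : ‖e‖ = 1) (a : ℝ) (w : EE N → ℝ) (ψ : ℝ → ℝ) {x : EE N}
    (hx : ⟪e, x⟫ ≠ a) :
    ψ (pol e a w x) + ψ (pol e a w (sig e a x)) = ψ (w x) + ψ (w (sig e a x)) := by
  have main : ∀ x, ⟪e, x⟫ < a →
    ψ (pol e a w x) + ψ (pol e a w (sig e a x)) = ψ (w x) + ψ (w (sig e a x)) := by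
    intro x hx
    rw [pol_left e a w hx, pol_right he a w hx]
    rcases le_total (w x) (w (sig e a x)) with h | h
    · rw [max_eq_right h, min_eq_left h, add_comm]
    · rw [max_eq_left h, min_eq_right h]
  rcases lt_or_gt_of_ne hx with h | h
  · exact main x h
  · have := main (sig e a x) (by rw [sig_inner he]; linarith)
    rw [sig_sig he] at this
    linarith

lemma pol_grad_sum {N : ℕ} {e : EE N} (he : ‖e‖ = 1) (a : ℝ) {w : EE N → ℝ} (p : ℝ) {x : EE N}
    (hx : ⟪e, x⟫ ≠ a) (h1 : DifferentiableAt ℝ w x) (h2 : DifferentiableAt ℝ w (sig e a x))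
    (h3 : DifferentiableAt ℝ (pol e a w) x) (h4 : DifferentiableAt ℝ (pol e a w) (sig e a x)) :
    ‖fderiv ℝ (pol e a w) x‖ ^ p + ‖fderiv ℝ (pol e a w) (sig e a x)‖ ^ p =
      ‖fderiv ℝ w x‖ ^ p + ‖fderiv ℝ w (sig e a x)‖ ^ p := by
  have main : ∀ x, ⟪e, x⟫ < a → DifferentiableAt ℝ w x → DifferentiableAt ℝ w (sig e a x) →
    DifferentiableAt ℝ (pol e a w) x → DifferentiableAt ℝ (pol e a w) (sig e a x) →
    ‖fderiv ℝ (pol e a w) x‖ ^ p + ‖fderiv ℝ (pol e a w) (sig e a x)‖ ^ p =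
      ‖fderiv ℝ w x‖ ^ p + ‖fderiv ℝ w (sig e a x)‖ ^ p := by
    intro x hx h1 h2 h3 h4
    have hev : ∀ᶠ y in 𝓝 x, ⟪e, y⟫ < a :=
      (continuous_const.inner continuous_id).continuousAt.eventually_lt continuousAt_const hx
    have e1 : pol e a w =ᶠ[𝓝 x] fun y => max (w y) (w (sig e a y)) := by
      filter_upwards [hev] with y hy using pol_left e a w hy
    have e2 : (fun y => pol e a w (sig e a y)) =ᶠ[𝓝 x] fun y => min (w y) (w (sig e a y)) := by
      filter_upwards [hev] with y hy using pol_right he a w hy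
    obtain ⟨d1, n1⟩ := sig_fderiv e a h2
    obtain ⟨d2, n2⟩ := sig_fderiv e a h4
    rw [← n1, ← n2, e1.fderiv_eq, e2.fderiv_eq]
    rcases fderiv_max_min h1 d1 (e1.differentiableAt_iff.1 h3) (e2.differentiableAt_iff.1 d2) with
      ⟨h, h'⟩ | ⟨h, h'⟩
    · rw [h, h']
    · rw [h, h', add_comm]
  rcases lt_or_gt_of_ne hx with h | h
  · exact main x h h1 h2 h3 h4
  · have := main (sig e a x) (by rw [sig_inner he]; linarith)
    rw [sig_sig he] at this
    linarith [this h2 h1 h4 h3]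

lemma int_eq_of_sum {N : ℕ} {e : EE N} (he : ‖e‖ = 1) (a : ℝ) {F G : EE N → ℝ}
    (hF : Integrable F) (hG : Integrable G)
    (h : ∀ᵐ x, F x + F (sig e a x) = G x + G (sig e a x)) : ∫ x, F x = ∫ x, G x := by
  have hmp := sig_mp e a
  have i1 : ∀ H : EE N → ℝ, ∫ x, H (sig e a x) = ∫ x, H x := fun H =>
    hmp.integral_comp (sig_emb he a) H
  have i2 : ∀ H : EE N → ℝ, Integrable H → Integrable (fun x => H (sig e a x)) := fun H hH =>
    hmp.integrable_comp_of_integrable hH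
  have := integral_congr_ae h
  rw [integral_add hF (i2 F hF), integral_add hG (i2 G hG), i1, i1] at this
  linarith

lemma pol_support {N : ℕ} (e : EE N) (a : ℝ) {w : EE N → ℝ} (hw : ∀ x, 0 ≤ w x)
    (hc : HasCompactSupport w) :
    HasCompactSupport (pol e a w) ∧ ∀ x ∈ tsupport (pol e a w),
      (⟪e, x⟫ ≤ a ∧ (x ∈ tsupport w ∨ sig e a x ∈ tsupport w)) ∨
      (a ≤ ⟪e, x⟫ ∧ x ∈ tsupport w ∧ sig e a x ∈ tsupport w) := by
  have hS : IsClosed (tsupport w) := isClosed_tsupport w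
  have hS' : IsClosed {x | sig e a x ∈ tsupport w} := hS.preimage (sig_cont e a)
  have hin : Continuous (fun x : EE N => ⟪e, x⟫) := continuous_const.inner continuous_id
  have hsub : tsupport (pol e a w) ⊆ {x | (⟪e, x⟫ ≤ a ∧ (x ∈ tsupport w ∨ sig e a x ∈ tsupport w)) ∨
      (a ≤ ⟪e, x⟫ ∧ x ∈ tsupport w ∧ sig e a x ∈ tsupport w)} := by
    apply closure_minimal
    · intro x hx
      by_cases hxa : ⟪e, x⟫ ≤ a
      · left
        refine ⟨hxa, ?_⟩
        by_contra hcon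
        push Not at hcon
        apply hx
        unfold pol
        rw [if_pos hxa, image_eq_zero_of_notMem_tsupport hcon.1,
          image_eq_zero_of_notMem_tsupport hcon.2, max_self]
      · right
        refine ⟨(not_le.1 hxa).le, ?_⟩
        by_contra hcon
        apply hx
        unfold pol
        rw [if_neg hxa]
        by_cases h1 : x ∈ tsupport w
        · have h2 : sig e a x ∉ tsupport w := fun h => hcon ⟨h1, h⟩
          rw [image_eq_zero_of_notMem_tsupport h2]
          exact min_eq_right (hw x)
        · rw [image_eq_zero_of_notMem_tsupport h1]
          exact min_eq_left (hw _)
    · exact ((isClosed_le hin continuous_const).inter (hS.union hS')).union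
        ((isClosed_le continuous_const hin).inter (hS.inter hS'))
  refine ⟨?_, hsub⟩
  have hKc : IsCompact (tsupport w ∪ {x | sig e a x ∈ tsupport w}) := by
    refine IsCompact.union hc.isCompact ?_
    have hiso : Isometry (sig e a) := Isometry.of_dist_eq fun x y => by
      rw [dist_eq_norm, dist_eq_norm, sig_norm]
    exact hiso.isClosedEmbedding.isCompact_preimage hc.isCompact
  apply hKc.of_isClosed_subset (isClosed_tsupport _)
  intro x hx
  rcases hsub hx with ⟨-, h⟩ | ⟨-, h, -⟩
  · exact h
  · exact Or.inl h

lemma e1_norm {N : ℕ} (hN : 2 ≤ N) : ‖e1 N‖ = 1 := by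
  obtain ⟨n, rfl⟩ : ∃ n, N = n + 1 := ⟨N - 1, by omega⟩
  have : e1 (n + 1) = EuclideanSpace.single 0 (1 : ℝ) := by
    ext i
    have : (e1 (n+1)) i = if (i : ℕ) = 0 then 1 else 0 := rfl
    rw [this, EuclideanSpace.single_apply]
    simp only [Fin.ext_iff, Fin.val_zero]
  rw [this]; simp

lemma mem_Om {N : ℕ} {R₀ R₁ s : ℝ} (hR₀ : 0 < R₀) (x : EE N) :
    x ∈ Om N R₀ R₁ s ↔ ‖x‖ < R₁ ∧ R₀ < ‖x - s • e1 N‖ := by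
  unfold Om
  rw [closure_ball _ hR₀.ne']
  simp [dist_eq_norm]

lemma isOpen_Om (N : ℕ) (R₀ R₁ s : ℝ) : IsOpen (Om N R₀ R₁ s) :=
  isOpen_ball.sdiff isClosed_closure

lemma Om_nonempty {N : ℕ} (hN : 2 ≤ N) {R₀ R₁ s : ℝ} (hR₀ : 0 < R₀) (hR : R₀ < R₁) (hs : 0 ≤ s) :
    (Om N R₀ R₁ s).Nonempty := by
  refine ⟨(-((R₀ + R₁) / 2)) • e1 N, (mem_Om hR₀ _).2 ⟨?_, ?_⟩⟩
  · rw [norm_smul, e1_norm hN, norm_neg, Real.norm_of_nonneg (by linarith)]; linarith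
  · rw [← sub_smul, norm_smul, e1_norm hN, Real.norm_eq_abs, abs_of_nonpos (by linarith)]; linarith

/-- Monotonicity of the eigenvalue via polarization. -/
lemma lam1_anti {N : ℕ} (hN : 2 ≤ N) {R₀ R₁ s t p : ℝ} (hR₀ : 0 < R₀) (hR : R₀ < R₁) (hp : 1 < p)
    (hs : 0 ≤ s) (hst : s ≤ t) : lam1 p (Om N R₀ R₁ t) ≤ lam1 p (Om N R₀ R₁ s) := by
  have hp0 : 0 < p := by linarith
  have he := e1_norm hN
  set e := e1 N with hedef
  set a := (s + t) / 2 with ha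
  apply le_lam1 hp0 (isOpen_Om _ _ _ _) (Om_nonempty hN hR₀ hR hs)
  intro u hsm hc hu
  obtain ⟨C, hC⟩ := contDiff_lipschitz hsm hc
  set w : EE N → ℝ := fun x => |u x| with hw
  have hwl : LipschitzWith C w := by
    have := (lipschitzWith_one_norm (E := ℝ)).comp hC
    rwa [one_mul] at this
  have hwc : HasCompactSupport w := hc.comp_left (g := fun t => |t|) abs_zero
  have hwt : tsupport w ⊆ tsupport u := by
    apply closure_mono
    intro x hx
    simpa [hw] using hx
  obtain ⟨hPc, hPs⟩ := pol_support e a (fun x => abs_nonneg (u x)) hwc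
  have hPl := pol_lip he a hwl
  have hsige : sig e a (s • e) = t • e := by
    rw [sig_apply he, inner_smul_right, real_inner_self_eq_norm_sq, he, ← add_smul]
    congr 1; rw [ha]; ring
  have hsub : tsupport (pol e a w) ⊆ Om N R₀ R₁ t := by
    intro x hx
    have hmem : ∀ y ∈ tsupport w, ‖y‖ < R₁ ∧ R₀ < ‖y - s • e‖ := fun y hy =>
      (mem_Om hR₀ y).1 (hu (hwt hy))
    have hd : ‖x - t • e‖ = ‖sig e a x - s • e‖ := by
      rw [← sig_norm e a x, ← hsige, sig_sig he]
    rw [mem_Om hR₀, ← hedef]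
    rcases hPs x hx with ⟨hxa, h | h⟩ | ⟨hxa, h, h'⟩
    · refine ⟨(hmem x h).1, (hmem x h).2.trans_le ?_⟩
      rw [hd]
      apply sig_norm_ge he
      rw [inner_smul_right, real_inner_self_eq_norm_sq, he]
      apply mul_nonneg <;> linarith
    · refine ⟨lt_of_le_of_lt ?_ (hmem _ h).1, ?_⟩
      · have := sig_norm_ge he a x 0 (by rw [inner_zero_right]; apply mul_nonneg <;> linarith)
        simpa using this
      · rw [hd]; exact (hmem _ h).2
    · refine ⟨(hmem x h).1, ?_⟩
      rw [hd]; exact (hmem _ h').2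
  have hmain := lam1_mul_le_lip hp (isOpen_Om N R₀ R₁ t) hPl hPc hsub
  have hq := (sig_mp e a).quasiMeasurePreserving
  have e1' : ∫ x, |pol e a w x| ^ p = ∫ x, |w x| ^ p := by
    apply int_eq_of_sum he a (integrable_pow hp0 hPl.continuous hPc)
      (integrable_pow hp0 hwl.continuous hwc)
    filter_upwards [hyperplane_null he a] with x hx
    exact pol_sum he a w (fun t => |t| ^ p) hx
  have e2' : ∫ x, ‖fderiv ℝ (pol e a w) x‖ ^ p = ∫ x, ‖fderiv ℝ w x‖ ^ p := by
    apply int_eq_of_sum he a (integrable_grad hp0 hPl hPc) (integrable_grad hp0 hwl hwc)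
    have d1 := hwl.ae_differentiableAt (μ := (volume : Measure (EE N)))
    have d2 := hPl.ae_differentiableAt (μ := (volume : Measure (EE N)))
    filter_upwards [hyperplane_null he a, d1, d2, hq.ae d1, hq.ae d2] with x hx h1 h2 h3 h4
    exact pol_grad_sum he a p hx h1 h3 h2 h4
  have e3' : ∫ x, ‖fderiv ℝ w x‖ ^ p ≤ ∫ x, ‖fderiv ℝ u x‖ ^ p := by
    apply integral_mono_ae (integrable_grad hp0 hwl hwc) (integrable_grad hp0 hC hc)
    filter_upwards [hwl.ae_differentiableAt (μ := (volume : Measure (EE N)))] with x hx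
    apply Real.rpow_le_rpow (norm_nonneg _) _ hp0.le
    have hud : DifferentiableAt ℝ u x := hsm.differentiable (by simp) x
    rcases lt_trichotomy (u x) 0 with h | h | h
    · have : w =ᶠ[𝓝 x] fun y => - u y := by
        filter_upwards [hud.continuousAt.eventually_lt continuousAt_const h] with y hy
          using abs_of_neg hy
      rw [this.fderiv_eq, fderiv_fun_neg, norm_neg]
    · rw [fderiv_eq_of_ge (f := w) (g := u) (fun y => le_abs_self _) (by simp [hw, h]) hx hud]
    · have : w =ᶠ[𝓝 x] fun y => u y := by
        filter_upwards [continuousAt_const.eventually_lt hud.continuousAt h] with y hy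
          using abs_of_pos hy
      rw [this.fderiv_eq]
  have e4' : ∫ x, |w x| ^ p = ∫ x, |u x| ^ p := by simp [hw]
  rw [e1', e2', e4'] at hmain
  exact hmain.trans e3'

open MeasureTheory Metric Set Filter
open scoped RealInnerProductSpace ENNReal Topology

/-- Change of variables estimates for a perturbation of the identity. -/
lemma perturb_integral {N : ℕ} {Φ : EE N → EE N} {Φ' : EE N → EE N →L[ℝ] EE N} {ε : ℝ}
    (hΦ : ∀ x, HasFDerivAt Φ (Φ' x) x) (hbij : Function.Bijective Φ)
    (hdet : ∀ x, |(Φ' x).det - 1| ≤ ε) (hε : ε < 1) {F : EE N → ℝ} (hF0 : ∀ x, 0 ≤ F x)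
    (hF : Integrable (fun x => F (Φ x))) (hFi : Integrable F) :
    (1 - ε) * ∫ x, F (Φ x) ≤ ∫ x, F x ∧ ∫ x, F x ≤ (1 + ε) * ∫ x, F (Φ x) := by
  have h1 := integral_image_eq_integral_abs_det_fderiv_smul (volume : Measure (EE N))
    MeasurableSet.univ (fun x _ => (hΦ x).hasFDerivWithinAt) hbij.1.injOn F
  have hintg := (integrableOn_image_iff_integrableOn_abs_det_fderiv_smul (volume : Measure (EE N))
    MeasurableSet.univ (fun x _ => (hΦ x).hasFDerivWithinAt) hbij.1.injOn F).1 (by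
      rw [image_univ, hbij.2.range_eq]; exact hFi.integrableOn)
  rw [image_univ, hbij.2.range_eq, setIntegral_univ, setIntegral_univ] at h1
  rw [integrableOn_univ] at hintg
  rw [h1, ← integral_const_mul, ← integral_const_mul]
  have hb : ∀ x, 1 - ε ≤ |(Φ' x).det| ∧ |(Φ' x).det| ≤ 1 + ε := by
    intro x
    have := abs_le.1 (hdet x)
    rw [abs_of_nonneg (by linarith)]
    constructor <;> linarith
  constructor
  · exact integral_mono (hF.const_mul _) hintg
      fun x => mul_le_mul_of_nonneg_right (hb x).1 (hF0 _)
  · exact integral_mono hintg (hF.const_mul _)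
      fun x => mul_le_mul_of_nonneg_right (hb x).2 (hF0 _)

lemma lam1_shift {N : ℕ} (hN : 2 ≤ N) {R₀ R₁ s t p κ ε : ℝ} (hR₀ : 0 < R₀) (hR : R₀ < R₁)
    (hp : 1 < p) (ht : 0 ≤ t) {η : EE N → ℝ} (hη : ContDiff ℝ (⊤ : ℕ∞) η) {L : NNReal}
    (hL : LipschitzWith L η) (h0 : ∀ x, R₁ ≤ ‖x‖ → η x = 0)
    (h1 : ∀ x, ‖x - s • e1 N‖ ≤ R₀ → η x = 1)
    (hδ : |t - s| * L ≤ κ) (hκ : κ ≤ ε) (hε : ε < 1)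
    (hdet : ∀ A : EE N →L[ℝ] EE N, ‖A - ContinuousLinearMap.id ℝ (EE N)‖ ≤ κ → |A.det - 1| ≤ ε) :
    (1 - ε) * lam1 p (Om N R₀ R₁ s) ≤ (1 + ε) * (1 + ε) ^ p * lam1 p (Om N R₀ R₁ t) := by
  have hp0 : 0 < p := by linarith
  have he := e1_norm hN
  set e := e1 N with hedef
  set δ := t - s with hδdef
  have hε0 : 0 ≤ ε := le_trans (by positivity) (hδ.trans hκ)
  let Φ : EE N → EE N := fun x => x + (δ * η x) • e
  let Φ' : EE N → EE N →L[ℝ] EE N := fun x =>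
    ContinuousLinearMap.id ℝ (EE N) + (δ • fderiv ℝ η x).smulRight e
  have hηd : ∀ x, HasFDerivAt η (fderiv ℝ η x) x := fun x =>
    (hη.differentiable (by simp) x).hasFDerivAt
  have hΦ : ∀ x, HasFDerivAt Φ (Φ' x) x := fun x =>
    (hasFDerivAt_id x).add (((hηd x).const_mul δ).smul_const e)
  have hΦs : ContDiff ℝ (⊤ : ℕ∞) Φ := contDiff_id.add ((contDiff_const.mul hη).smul contDiff_const)
  have hΦ'n : ∀ x, ‖Φ' x - ContinuousLinearMap.id ℝ (EE N)‖ ≤ κ := by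
    intro x
    simp only [Φ', add_sub_cancel_left]
    rw [ContinuousLinearMap.norm_smulRight_apply, he, mul_one, norm_smul, Real.norm_eq_abs]
    exact (mul_le_mul_of_nonneg_left (norm_fderiv_le_of_lipschitz ℝ hL) (abs_nonneg _)).trans hδ
  have hΦ'1 : ∀ x, ‖Φ' x‖ ≤ 1 + ε := by
    intro x
    have := norm_add_le (Φ' x - ContinuousLinearMap.id ℝ (EE N)) (ContinuousLinearMap.id ℝ (EE N))
    rw [sub_add_cancel] at this
    have h2 := ContinuousLinearMap.norm_id_le (𝕜 := ℝ) (E := EE N)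
    linarith [hΦ'n x]
  have hgl : ∀ x y, ‖(δ * η x) • e - (δ * η y) • e‖ ≤ κ * ‖x - y‖ := by
    intro x y
    rw [← sub_smul, norm_smul, he, mul_one, ← mul_sub, Real.norm_eq_abs, abs_mul]
    have := hL.dist_le_mul x y
    rw [Real.dist_eq, dist_eq_norm] at this
    calc _ ≤ |δ| * (L * ‖x - y‖) := mul_le_mul_of_nonneg_left this (abs_nonneg _)
      _ = (|δ| * L) * ‖x - y‖ := by ring
      _ ≤ _ := mul_le_mul_of_nonneg_right hδ (norm_nonneg _)
  have hκ0 : 0 ≤ κ := le_trans (by positivity) hδ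
  have hbij : Function.Bijective Φ := by
    constructor
    · intro x y hxy
      have h2 := hgl x y
      have h3 : (δ * η x) • e - (δ * η y) • e = -(x - y) := by
        have : x + (δ * η x) • e = y + (δ * η y) • e := hxy
        rw [neg_sub]
        exact sub_eq_sub_iff_add_eq_add.2 (by rw [add_comm, this, add_comm])
      rw [h3, norm_neg] at h2
      have h4 : ‖x - y‖ = 0 := by
        have := norm_nonneg (x - y)
        nlinarith
      exact sub_eq_zero.1 (norm_eq_zero.1 h4)
    · intro y
      have hcon : ContractingWith (⟨κ, hκ0⟩ : NNReal) (fun x => y - (δ * η x) • e) := by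
        constructor
        · exact NNReal.coe_lt_coe.1 (show κ < 1 by linarith)
        · apply LipschitzWith.of_dist_le_mul
          intro a b
          rw [dist_eq_norm, dist_eq_norm, sub_sub_sub_cancel_left, norm_sub_rev]
          exact hgl a b
      refine ⟨ContractingWith.fixedPoint _ hcon, ?_⟩
      have := hcon.fixedPoint_isFixedPt
      have h5 : y - (δ * η (ContractingWith.fixedPoint _ hcon)) • e =
        ContractingWith.fixedPoint _ hcon := this
      show ContractingWith.fixedPoint _ hcon + _ = y
      nth_rewrite 1 [← h5]
      exact sub_add_cancel _ _
  have hε1 : 0 < 1 - ε := by linarith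
  have hC : 0 < (1 + ε) * (1 + ε) ^ p := by positivity
  rw [← div_le_iff₀' hC]
  apply le_lam1 hp0 (isOpen_Om _ _ _ _) (Om_nonempty hN hR₀ hR ht)
  intro u hsm hc hu
  set v : EE N → ℝ := fun x => u (Φ x) with hv
  have hvs : ContDiff ℝ (⊤ : ℕ∞) v := hsm.comp hΦs
  have hvt : tsupport v ⊆ Φ ⁻¹' tsupport u :=
    closure_minimal (fun x hx => subset_tsupport u hx)
      ((isClosed_tsupport u).preimage hΦs.continuous)
  have hvO : tsupport v ⊆ Om N R₀ R₁ s := by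
    intro x hx
    have h2 := (mem_Om hR₀ _).1 (hu (hvt hx))
    have hxR : ‖x‖ < R₁ := by
      by_contra hcon
      have : Φ x = x := by simp [Φ, h0 x (not_lt.1 hcon)]
      rw [this] at h2
      exact hcon h2.1
    refine (mem_Om hR₀ _).2 ⟨hxR, ?_⟩
    by_contra hcon
    have h3 : Φ x - t • e = x - s • e := by
      simp only [Φ, h1 x (not_lt.1 hcon), mul_one, hδdef, sub_smul]
      abel
    rw [h3] at h2
    exact hcon h2.2
  have hvc : HasCompactSupport v := by
    apply (isCompact_closedBall (0 : EE N) R₁).of_isClosed_subset (isClosed_tsupport v)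
    intro x hx
    rw [mem_closedBall_zero_iff]
    exact ((mem_Om hR₀ _).1 (hvO hx)).1.le
  obtain ⟨C, hCu⟩ := contDiff_lipschitz hsm hc
  obtain ⟨C', hCv⟩ := contDiff_lipschitz hvs hvc
  have hmain := lam1_mul_le hp0 hvs hvc hvO
  have hd : ∀ x, |(Φ' x).det - 1| ≤ ε := fun x => hdet _ (hΦ'n x)
  obtain ⟨-, k1⟩ := perturb_integral (F := fun x => |u x| ^ p) hΦ hbij hd hε
    (fun x => Real.rpow_nonneg (abs_nonneg _) _)
    (integrable_pow hp0 hvs.continuous hvc) (integrable_pow hp0 hsm.continuous hc)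
  have hGi : Integrable (fun x => ‖fderiv ℝ u (Φ x)‖ ^ p) := by
    apply Continuous.integrable_of_hasCompactSupport
    · exact ((hsm.continuous_fderiv (by simp)).norm.comp hΦs.continuous).rpow_const
        (fun x => Or.inr hp0.le)
    · apply hvc.mono'
      intro x hx
      by_contra hcon
      apply hx
      have : Φ x ∉ tsupport u := by
        intro hmem
        apply hcon
        have hopen : IsOpenMap Φ := by
          have hcl : Topology.IsClosedEmbedding Φ := by
            apply AntilipschitzWith.isClosedEmbedding (K := ⟨(1 - κ)⁻¹, by
              apply inv_nonneg.2; linarith⟩)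
            · apply AntilipschitzWith.of_le_mul_dist
              intro a b
              rw [dist_eq_norm, dist_eq_norm]
              show _ ≤ (1 - κ)⁻¹ * _
              rw [inv_mul_eq_div, le_div_iff₀ (by linarith)]
              have h7 := hgl a b
              have h8 : a - b = (Φ a - Φ b) - ((δ * η a) • e - (δ * η b) • e) := by
                simp only [Φ]; abel
              have h9 := norm_sub_le (Φ a - Φ b) ((δ * η a) • e - (δ * η b) • e)
              rw [← h8] at h9
              nlinarith
            · apply LipschitzWith.uniformContinuous (K := 1 + ⟨κ, hκ0⟩)
              apply LipschitzWith.of_dist_le_mul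
              intro a b
              rw [dist_eq_norm, dist_eq_norm]
              have h8 : Φ a - Φ b = (a - b) + ((δ * η a) • e - (δ * η b) • e) := by
                simp only [Φ]; abel
              rw [h8]
              refine (norm_add_le _ _).trans ?_
              show _ ≤ (1 + κ) * _
              linarith [hgl a b]
          exact ((Equiv.ofBijective Φ hbij).toHomeomorphOfIsInducing hcl.isInducing).isOpenMap
        have := hopen.preimage_closure_subset_closure_preimage (s := Function.support u)
        exact this hmem
      show ‖fderiv ℝ u (Φ x)‖ ^ p = 0
      rw [fderiv_zero_of_notMem this]
      simp [hp0.ne']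
  obtain ⟨k2, -⟩ := perturb_integral (F := fun x => ‖fderiv ℝ u x‖ ^ p) hΦ hbij hd hε
    (fun x => Real.rpow_nonneg (norm_nonneg _) _) hGi (integrable_grad hp0 hCu hc)
  have k3 : ∫ x, ‖fderiv ℝ v x‖ ^ p ≤ (1 + ε) ^ p * ∫ x, ‖fderiv ℝ u (Φ x)‖ ^ p := by
    rw [← integral_const_mul]
    apply integral_mono (integrable_grad hp0 hCv hvc) (hGi.const_mul _)
    intro x
    simp only
    rw [← Real.mul_rpow (by linarith) (norm_nonneg _)]
    apply Real.rpow_le_rpow (norm_nonneg _) _ hp0.le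
    have h5 : HasFDerivAt v ((fderiv ℝ u (Φ x)).comp (Φ' x)) x :=
      HasFDerivAt.comp (g := u) (f := Φ) x (hsm.differentiable (by simp) _).hasFDerivAt (hΦ x)
    rw [h5.fderiv, mul_comm]
    refine (ContinuousLinearMap.opNorm_comp_le _ _).trans ?_
    exact mul_le_mul_of_nonneg_left (hΦ'1 x) (norm_nonneg _)
  have hl0 := lam1_nonneg p (Om N R₀ R₁ s)
  have hI0 := int_grad_nonneg (p := p) u
  rw [div_mul_eq_mul_div, div_le_iff₀' hC]
  have hpp : 0 < (1 + ε) ^ p := by positivity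
  calc (1 - ε) * lam1 p (Om N R₀ R₁ s) * ∫ x, |u x| ^ p
      ≤ (1 - ε) * lam1 p (Om N R₀ R₁ s) * ((1 + ε) * ∫ x, |v x| ^ p) :=
        mul_le_mul_of_nonneg_left k1 (by positivity)
    _ = (1 - ε) * (1 + ε) * (lam1 p (Om N R₀ R₁ s) * ∫ x, |v x| ^ p) := by ring
    _ ≤ (1 - ε) * (1 + ε) * ((1 + ε) ^ p * ∫ x, ‖fderiv ℝ u (Φ x)‖ ^ p) :=
        mul_le_mul_of_nonneg_left (hmain.trans k3) (by positivity)
    _ = (1 + ε) * (1 + ε) ^ p * ((1 - ε) * ∫ x, ‖fderiv ℝ u (Φ x)‖ ^ p) := by ring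
    _ ≤ _ := mul_le_mul_of_nonneg_left k2 hC.le

lemma lam1_near {N : ℕ} (hN : 2 ≤ N) {R₀ R₁ s₀ ε : ℝ} (hR₀ : 0 < R₀) (hR : R₀ < R₁)
    (hs₀ : 0 ≤ s₀) (hs₁ : s₀ < R₁ - R₀) (hε0 : 0 < ε) (hε : ε < 1) :
    ∃ δ > 0, ∀ s t, 0 ≤ s → 0 ≤ t → |s - s₀| < δ → |t - s₀| < δ → ∀ p, 1 < p →
      (1 - ε) * lam1 p (Om N R₀ R₁ s) ≤ (1 + ε) * (1 + ε) ^ p * lam1 p (Om N R₀ R₁ t) := by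
  have he := e1_norm hN
  obtain ⟨κ, hκ, hκd⟩ : ∃ κ > 0, ∀ A : EE N →L[ℝ] EE N,
      ‖A - ContinuousLinearMap.id ℝ (EE N)‖ < κ → |A.det - 1| < ε := by
    have hcd := (ContinuousLinearMap.continuous_det (𝕜 := ℝ) (E := EE N)).continuousAt
      (x := ContinuousLinearMap.id ℝ (EE N))
    obtain ⟨κ, hκ, h⟩ := Metric.continuousAt_iff.1 hcd ε hε0
    refine ⟨κ, hκ, fun A hA => ?_⟩
    have h2 := h (x := A) (by rwa [dist_eq_norm])
    rw [Real.dist_eq] at h2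
    have h3 : (ContinuousLinearMap.id ℝ (EE N)).det = 1 := by
      simp [ContinuousLinearMap.det]
    rwa [h3] at h2
  set g := R₁ - R₀ - s₀ with hg
  have hg0 : 0 < g := by linarith
  let b : ContDiffBump (0 : EE N) := ⟨R₁ - g / 2, R₁ - g / 4, by linarith, by linarith⟩
  have hbs : ContDiff ℝ (⊤ : ℕ∞) (b : EE N → ℝ) := b.contDiff
  obtain ⟨L, hL⟩ := contDiff_lipschitz hbs b.hasCompactSupport
  set κ' := min (κ / 2) ε with hκ'
  have hκ'0 : 0 < κ' := by positivity
  refine ⟨min (g / 2) (κ' / (2 * (L + 1))), by positivity, ?_⟩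
  intro s t hs ht hsd htd p hp
  refine lam1_shift hN hR₀ hR hp ht hbs hL ?_ ?_ (κ := κ') ?_ (min_le_right _ _) hε ?_
  · intro x hx
    apply b.zero_of_le_dist
    rw [dist_zero_right]
    show R₁ - g / 4 ≤ _
    linarith
  · intro x hx
    apply b.one_of_mem_closedBall
    rw [mem_closedBall_zero_iff]
    show _ ≤ R₁ - g / 2
    have h1 := norm_add_le (x - s • e1 N) (s • e1 N)
    rw [sub_add_cancel, norm_smul, he, mul_one, Real.norm_of_nonneg hs] at h1
    have h2 := (abs_lt.1 (hsd.trans_le (min_le_left _ _))).2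
    linarith
  · have h1 := hsd.trans_le (min_le_right _ _)
    have h2 := htd.trans_le (min_le_right _ _)
    have h3 : |t - s| ≤ |t - s₀| + |s - s₀| := by
      rw [abs_sub_comm s]; exact abs_sub_le _ _ _
    have hL0 : (0:ℝ) ≤ L := L.2
    have h4 : |t - s| ≤ κ' / (L + 1) := by
      have : κ' / (2 * (L + 1)) + κ' / (2 * (L + 1)) = κ' / (L + 1) := by field_simp; norm_num
      linarith
    calc |t - s| * L ≤ κ' / (L + 1) * (L + 1) := by
          apply mul_le_mul h4 (by linarith) hL0 (by positivity)
      _ = κ' := by field_simp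
  · intro A hA
    have h5 : κ' ≤ κ / 2 := min_le_left _ _
    exact (hκd A (by linarith)).le

open MeasureTheory Metric Set Filter
open scoped RealInnerProductSpace ENNReal Topology

lemma div_identity {N : ℕ} {f : EE N → ℝ} (hf : ContDiff ℝ 1 f) (hc : HasCompactSupport f) :
    Integrable (fun x => fderiv ℝ f x x) ∧ ∫ x, fderiv ℝ f x x = -(N * ∫ x, f x) := by
  have hfc : Continuous f := hf.continuous
  have hfd : Continuous (fderiv ℝ f) := hf.continuous_fderiv one_ne_zero
  have hintg : ∀ i : Fin N, Integrable (fun x : EE N => x i * fderiv ℝ f x (EuclideanSpace.single i 1)) := by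
    intro i
    apply Continuous.integrable_of_hasCompactSupport
    · exact (by fun_prop : Continuous fun x : EE N => x i).mul (hfd.clm_apply continuous_const)
    · apply HasCompactSupport.mul_left
      exact (hc.fderiv ℝ).comp_left (g := fun L : EE N →L[ℝ] ℝ => L (EuclideanSpace.single i 1)) rfl
  have hcd : ∀ i : Fin N, ∀ x, HasFDerivAt (fun x : EE N => x i) (EuclideanSpace.proj i : EE N →L[ℝ] ℝ) x :=
    fun i x => (EuclideanSpace.proj i : EE N →L[ℝ] ℝ).hasFDerivAt
  have hI : ∀ i : Fin N, ∫ x : EE N, x i * fderiv ℝ f x (EuclideanSpace.single i 1) = - ∫ x, f x := by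
    intro i
    have h1 : ∀ x : EE N, fderiv ℝ (fun x : EE N => x i) x (EuclideanSpace.single i 1) = 1 := by
      intro x
      rw [(hcd i x).fderiv]
      simp
    rw [integral_mul_fderiv_eq_neg_fderiv_mul_of_integrable]
    · simp_rw [h1, one_mul]
    · simp_rw [h1, one_mul]
      exact hfc.integrable_of_hasCompactSupport hc
    · exact hintg i
    · exact ((by fun_prop : Continuous fun x : EE N => x i).mul hfc).integrable_of_hasCompactSupport
        hc.mul_left
    · exact fun x _ => (hcd i x).differentiableAt
    · exact fun x _ => hf.differentiable one_ne_zero x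
  have hsum : (fun x : EE N => fderiv ℝ f x x) =
      fun x => ∑ i : Fin N, x i * fderiv ℝ f x (EuclideanSpace.single i 1) := by
    funext x
    have hx : x = ∑ i : Fin N, x i • EuclideanSpace.single i (1:ℝ) := by
      have := (EuclideanSpace.basisFun (Fin N) ℝ).sum_repr x
      simpa using this.symm
    conv_lhs => rw [hx, map_sum]
    rw [← hx]
    simp
  rw [hsum]
  refine ⟨integrable_finsetSum _ (fun i _ => hintg i), ?_⟩
  rw [integral_finsetSum _ (fun i _ => hintg i)]
  simp [hI]

/-- The radial profile. -/
lemma profile_bound {N : ℕ} (hN : 2 ≤ N) {R₀ R₁ r : ℝ} (hR₀ : 0 < R₀) (hR : R₀ < R₁)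
    (h0 : R₀ ≤ r) (h1 : r ≤ R₁) :
    |(R₁ ^ (N - 1) + R₀ ^ (N - 1)) / (R₁ ^ N - R₀ ^ N) +
      (-((R₀ * R₁) ^ (N - 1) * (R₀ + R₁)) / (R₁ ^ N - R₀ ^ N)) * (r ^ N)⁻¹| * r ≤ 1 := by
  obtain ⟨m, rfl⟩ : ∃ m, N = m + 1 := ⟨N - 1, by omega⟩
  simp only [Nat.add_sub_cancel]
  have hr : 0 < r := by linarith
  have hR1 : 0 < R₁ := by linarith
  have hD : 0 < R₁ ^ (m+1) - R₀ ^ (m+1) := by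
    have := pow_lt_pow_left₀ hR hR₀.le (show m + 1 ≠ 0 by omega)
    linarith
  rw [← abs_of_pos hr, ← abs_mul, abs_of_pos hr, abs_le]
  have e : ((R₁ ^ m + R₀ ^ m) / (R₁ ^ (m+1) - R₀ ^ (m+1)) +
      (-((R₀ * R₁) ^ m * (R₀ + R₁)) / (R₁ ^ (m+1) - R₀ ^ (m+1))) * (r ^ (m+1))⁻¹) * r
      = ((R₁ ^ m + R₀ ^ m) * r * r ^ m - (R₀ * R₁) ^ m * (R₀ + R₁)) /
        ((R₁ ^ (m+1) - R₀ ^ (m+1)) * r ^ m) := by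
    field_simp
    ring
  have a0 : R₀ ^ m ≤ r ^ m := pow_le_pow_left₀ hR₀.le h0 m
  have a1 : r ^ m ≤ R₁ ^ m := pow_le_pow_left₀ hr.le h1 m
  have b0 : 0 < R₀ ^ m := by positivity
  have b1 : 0 < R₁ ^ m := by positivity
  have b2 : 0 < r ^ m := by positivity
  rw [e]
  constructor
  · rw [le_div_iff₀ (by positivity)]
    simp only [mul_pow, pow_succ]
    nlinarith [mul_nonneg (mul_nonneg b1.le hR1.le) (sub_nonneg.2 a0), mul_nonneg (mul_nonneg b1.le b2.le) (sub_nonneg.2 h0), mul_nonneg (mul_nonneg b0.le b2.le) (sub_nonneg.2 h0), mul_nonneg (mul_nonneg b1.le hR₀.le) (sub_nonneg.2 a0)]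
  · rw [div_le_iff₀ (by positivity)]
    simp only [mul_pow, pow_succ]
    nlinarith [mul_nonneg (mul_nonneg b0.le hR1.le) (sub_nonneg.2 a1), mul_nonneg (mul_nonneg b1.le b2.le) (sub_nonneg.2 h1), mul_nonneg (mul_nonneg b0.le b2.le) (sub_nonneg.2 h1), mul_nonneg (mul_nonneg b0.le hR₀.le) (sub_nonneg.2 a1)]

lemma radial_deriv {N n : ℕ} (a c : ℝ) {x : EE N} (hx : x ≠ 0) :
    ContDiffAt ℝ 1 (fun x : EE N => a + c * (‖x‖ ^ n)⁻¹) x ∧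
    fderiv ℝ (fun x : EE N => a + c * (‖x‖ ^ n)⁻¹) x x = - (n * (c * (‖x‖ ^ n)⁻¹)) := by
  have hn : 0 < ‖x‖ := norm_pos_iff.2 hx
  have hcd : ContDiffAt ℝ 1 (fun x : EE N => ‖x‖) x := contDiffAt_norm ℝ hx
  refine ⟨contDiffAt_const.add (contDiffAt_const.mul ((hcd.pow n).inv (by positivity))), ?_⟩
  have hd : DifferentiableAt ℝ (fun x : EE N => ‖x‖) x := hcd.differentiableAt one_ne_zero
  have h1 : HasDerivAt (fun r : ℝ => a + c * (r ^ n)⁻¹) (c * (-(n * ‖x‖ ^ (n - 1)) / (‖x‖ ^ n) ^ 2)) ‖x‖ :=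
    (((hasDerivAt_pow n ‖x‖).inv (by positivity)).const_mul c).const_add a
  have h2 := h1.comp_hasFDerivAt x hd.hasFDerivAt
  have h3 : fderiv ℝ (fun x : EE N => a + c * (‖x‖ ^ n)⁻¹) x = _ := h2.fderiv
  rw [h3]
  simp only [_root_.smul_apply, smul_eq_mul]
  rw [hd.fderiv_norm_self]
  rcases n with _ | n
  · simp
  · simp only [Nat.add_sub_cancel]
    field_simp
    ring

noncomputable def hC (N : ℕ) (R₀ R₁ : ℝ) : ℝ := N * ((R₁ ^ (N - 1) + R₀ ^ (N - 1)) / (R₁ ^ N - R₀ ^ N))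

lemma lam1_lower {N : ℕ} (hN : 2 ≤ N) {R₀ R₁ p : ℝ} (hR₀ : 0 < R₀) (hR : R₀ < R₁) (hp : 1 < p) :
    hC N R₀ R₁ - (p - 1) ≤ lam1 p (Om N R₀ R₁ 0) := by
  have hp0 : 0 < p := by linarith
  apply le_lam1 hp0 (isOpen_Om _ _ _ _) (Om_nonempty hN hR₀ hR le_rfl)
  intro u hs hc hu
  have hu1 : ContDiff ℝ 1 u := hs.of_le (by exact_mod_cast le_top)
  set k0 := (R₁ ^ (N - 1) + R₀ ^ (N - 1)) / (R₁ ^ N - R₀ ^ N) with hk0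
  set c := (-((R₀ * R₁) ^ (N - 1) * (R₀ + R₁)) / (R₁ ^ N - R₀ ^ N)) with hcdef
  set k : EE N → ℝ := fun x => k0 + c * (‖x‖ ^ N)⁻¹ with hk
  set g : EE N → ℝ := fun x => ‖u x‖ ^ p with hg
  have hg1 : ContDiff ℝ 1 g := hu1.norm_rpow hp
  have hmem : ∀ x ∈ tsupport u, R₀ < ‖x‖ ∧ ‖x‖ < R₁ := by
    intro x hx
    have := (mem_Om hR₀ x).1 (hu hx)
    simp only [zero_smul, sub_zero] at this
    exact this.symm
  have hne : ∀ x ∈ tsupport u, x ≠ 0 := by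
    intro x hx
    have := (hmem x hx).1
    exact norm_pos_iff.1 (by linarith)
  set f : EE N → ℝ := fun x => g x * k x with hf
  have hfu : Function.support f ⊆ Function.support u := by
    intro x hx h0
    apply hx
    simp only [hf, hg]
    rw [h0]
    simp [hp0.ne']
  have hfc : HasCompactSupport f := hc.mono hfu
  have hf1 : ContDiff ℝ 1 f := by
    rw [contDiff_iff_contDiffAt]
    intro x
    by_cases hx : x ∈ tsupport u
    · exact hg1.contDiffAt.mul (radial_deriv k0 c (hne x hx)).1
    · have : f =ᶠ[𝓝 x] fun _ => 0 := by
        have h2 := notMem_tsupport_iff_eventuallyEq.1 hx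
        filter_upwards [h2] with y hy
        simp only [hf, hg]
        rw [hy]; simp [hp0.ne']
      exact contDiffAt_const.congr_of_eventuallyEq this
  obtain ⟨d1, d2⟩ := div_identity hf1 hfc
  have hfi : Integrable f := hf1.continuous.integrable_of_hasCompactSupport hfc
  have hD : Integrable (fun x => fderiv ℝ f x x + N * f x) := d1.add (hfi.const_mul _)
  have hD0 : ∫ x, (fderiv ℝ f x x + N * f x) = 0 := by
    rw [integral_add d1 (hfi.const_mul _), d2, integral_const_mul]; ring
  obtain ⟨C, hCu⟩ := contDiff_lipschitz hs hc
  have i1 := integrable_pow hp0 hs.continuous hc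
  have i2 := integrable_grad hp0 hCu hc
  have hpt : ∀ x, hC N R₀ R₁ * |u x| ^ p ≤
      (fderiv ℝ f x x + N * f x) + ((p - 1) * |u x| ^ p + ‖fderiv ℝ u x‖ ^ p) := by
    intro x
    have hy := young_tangent (abs_nonneg (u x)) (norm_nonneg (fderiv ℝ u x)) hp
    by_cases hx : x ∈ tsupport u
    · have hgd := hg1.differentiable one_ne_zero x
      obtain ⟨r1, r2⟩ := radial_deriv (n := N) k0 c (hne x hx)
      have hkd := r1.differentiableAt one_ne_zero
      have e1 : fderiv ℝ f x = g x • fderiv ℝ k x + k x • fderiv ℝ g x := by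
        exact fderiv_mul hgd hkd
      have e2 : fderiv ℝ f x x = g x * (-(N * (c * (‖x‖ ^ N)⁻¹))) + k x * fderiv ℝ g x x := by
        rw [e1, ← r2]; simp [hk]
      have b1 : ‖fderiv ℝ g x‖ ≤ p * |u x| ^ (p - 1) * ‖fderiv ℝ u x‖ :=
        norm_fderiv_norm_rpow_le (hu1.differentiable one_ne_zero) hp
      have b2 : |fderiv ℝ g x x| ≤ ‖fderiv ℝ g x‖ * ‖x‖ := (fderiv ℝ g x).le_opNorm x
      have b3 : |k x| * ‖x‖ ≤ 1 := profile_bound hN hR₀ hR (hmem x hx).1.le (hmem x hx).2.le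
      have b4 : |k x * fderiv ℝ g x x| ≤ p * |u x| ^ (p - 1) * ‖fderiv ℝ u x‖ := by
        rw [abs_mul]
        calc |k x| * |fderiv ℝ g x x| ≤ |k x| * (‖fderiv ℝ g x‖ * ‖x‖) :=
              mul_le_mul_of_nonneg_left b2 (abs_nonneg _)
          _ = (|k x| * ‖x‖) * ‖fderiv ℝ g x‖ := by ring
          _ ≤ 1 * ‖fderiv ℝ g x‖ := mul_le_mul_of_nonneg_right b3 (norm_nonneg _)
          _ ≤ _ := by rw [one_mul]; exact b1
      have b5 := neg_le_of_abs_le b4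
      have e3 : hC N R₀ R₁ * |u x| ^ p = N * k0 * g x := rfl
      rw [e3, e2]
      have e4 : f x = g x * (k0 + c * (‖x‖ ^ N)⁻¹) := rfl
      rw [e4]
      nlinarith
    · have h0 : u x = 0 := image_eq_zero_of_notMem_tsupport hx
      have h1 : x ∉ tsupport f := fun h => hx (closure_mono hfu h)
      rw [fderiv_zero_of_notMem h1, fderiv_zero_of_notMem hx, image_eq_zero_of_notMem_tsupport h1, h0]
      simp [hp0.ne']
  have hG : Integrable (fun x => (p - 1) * |u x| ^ p + ‖fderiv ℝ u x‖ ^ p) :=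
    (i1.const_mul (p - 1)).add i2
  have hfin := integral_mono (i1.const_mul (hC N R₀ R₁)) (hD.add hG) hpt
  have e5 : ∫ x, ((fun x => fderiv ℝ f x x + N * f x) +
      fun x => (p - 1) * |u x| ^ p + ‖fderiv ℝ u x‖ ^ p) x =
      0 + ∫ x, ((p - 1) * |u x| ^ p + ‖fderiv ℝ u x‖ ^ p) := by
    rw [← hD0]; exact integral_add hD hG
  rw [integral_const_mul, e5, integral_add (i1.const_mul (p-1)) i2, integral_const_mul] at hfin
  linarith

open MeasureTheory Metric Set Filter
open scoped RealInnerProductSpace ENNReal Topology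

/-- clamp to `[0,1]`. -/
noncomputable def clp (t : ℝ) : ℝ := max 0 (min 1 t)

lemma clp_nonneg (t : ℝ) : 0 ≤ clp t := le_max_left _ _
lemma clp_le_one (t : ℝ) : clp t ≤ 1 := max_le zero_le_one (min_le_left _ _)
lemma clp_of_le {t : ℝ} (h : t ≤ 0) : clp t = 0 := max_eq_left ((min_le_right _ _).trans h)
lemma clp_of_ge {t : ℝ} (h : 1 ≤ t) : clp t = 1 := by
  unfold clp; rw [min_eq_left h]; simp
lemma clp_of_mem {t : ℝ} (h0 : 0 ≤ t) (h1 : t ≤ 1) : clp t = t := by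
  unfold clp; rw [min_eq_right h1, max_eq_right h0]
lemma clp_mono : Monotone clp := fun _ _ h => max_le_max le_rfl (min_le_min le_rfl h)
lemma clp_lip : LipschitzWith 1 clp := (LipschitzWith.id.const_min 1).const_max 0

/-- Radial plateau function: 1 on the ball of radius `r`, 0 off the ball of radius `r+ε`. -/
noncomputable def plat {N : ℕ} (c : EE N) (r ε : ℝ) (x : EE N) : ℝ := clp ((r + ε - ‖x - c‖) / ε)

lemma plat_one {N : ℕ} {c : EE N} {r ε : ℝ} (hε : 0 < ε) {x : EE N} (h : ‖x - c‖ ≤ r) :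
    plat c r ε x = 1 := clp_of_ge (by rw [le_div_iff₀ hε]; linarith)

lemma plat_zero {N : ℕ} {c : EE N} {r ε : ℝ} (hε : 0 < ε) {x : EE N} (h : r + ε ≤ ‖x - c‖) :
    plat c r ε x = 0 := clp_of_le (div_nonpos_of_nonpos_of_nonneg (by linarith) hε.le)

lemma plat_lip {N : ℕ} (c : EE N) (r : ℝ) {ε : ℝ} (hε : 0 < ε) :
    LipschitzWith (Real.toNNReal ε⁻¹) (plat c r ε) := by
  apply LipschitzWith.of_dist_le_mul
  intro x y
  have h := clp_lip.dist_le_mul ((r + ε - ‖x - c‖) / ε) ((r + ε - ‖y - c‖) / ε)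
  refine h.trans ?_
  rw [Real.coe_toNNReal _ (by positivity), NNReal.coe_one, one_mul, Real.dist_eq, ← sub_div, abs_div,
    abs_of_pos hε, div_eq_inv_mul]
  apply mul_le_mul_of_nonneg_left _ (by positivity)
  rw [dist_eq_norm]
  have := abs_norm_sub_norm_le (y - c) (x - c)
  rw [sub_sub_sub_cancel_right, norm_sub_rev y x] at this
  have e : r + ε - ‖x - c‖ - (r + ε - ‖y - c‖) = ‖y - c‖ - ‖x - c‖ := by ring
  rw [e]
  exact this

lemma plat_tsupport {N : ℕ} (c : EE N) (r : ℝ) {ε : ℝ} (hε : 0 < ε) :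
    tsupport (plat c r ε) ⊆ closedBall c (r + ε) := by
  apply closure_minimal _ isClosed_closedBall
  intro x hx
  rw [mem_closedBall, dist_eq_norm]
  by_contra h
  exact hx (plat_zero hε (not_le.1 h).le)

lemma plat_cpt {N : ℕ} (c : EE N) (r : ℝ) {ε : ℝ} (hε : 0 < ε) :
    HasCompactSupport (plat c r ε) :=
  (isCompact_closedBall c (r + ε)).of_isClosed_subset (isClosed_tsupport _) (plat_tsupport c r hε)

lemma pow_diff_le {a b : ℝ} (ha : 0 ≤ a) (hab : a ≤ b) (n : ℕ) :
    b ^ n - a ^ n ≤ n * b ^ (n - 1) * (b - a) := by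
  have h := abs_pow_sub_pow_le b a n
  rw [abs_of_nonneg (ha.trans hab), abs_of_nonneg ha, max_eq_left hab, abs_of_nonneg (sub_nonneg.2 hab)] at h
  have := le_abs_self (b ^ n - a ^ n)
  nlinarith

lemma vol_closedBall {N : ℕ} (c : EE N) {r : ℝ} (hr : 0 ≤ r) :
    volume.real (closedBall c r) = r ^ N * volume.real (ball (0 : EE N) 1) := by
  rw [Measure.addHaar_real_closedBall _ _ hr]; simp

lemma vol_ball {N : ℕ} (c : EE N) {r : ℝ} (hr : 0 < r) :
    volume.real (ball c r) = r ^ N * volume.real (ball (0 : EE N) 1) := by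
  rw [measureReal_def, Measure.addHaar_ball_of_pos _ _ hr, ENNReal.toReal_mul,
    ENNReal.toReal_ofReal (by positivity), measureReal_def]
  simp

lemma integrable_grad1 {N : ℕ} {u : EE N → ℝ} {C : NNReal}
    (hu : LipschitzWith C u) (hc : HasCompactSupport u) :
    Integrable (fun x => ‖fderiv ℝ u x‖) := by
  simpa using integrable_grad one_pos hu hc

lemma plat_grad {N : ℕ} (c : EE N) {r ε : ℝ} (hr : 0 < r) (hε : 0 < ε) :
    ∫ x, ‖fderiv ℝ (plat c r ε) x‖ ≤ volume.real (ball (0 : EE N) 1) * (N * (r + ε) ^ (N - 1)) := by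
  have hS : MeasurableSet (closedBall c (r + ε) \ ball c r) :=
    measurableSet_closedBall.diff measurableSet_ball
  have hfin : volume (closedBall c (r + ε) \ ball c r) ≠ ∞ :=
    ((measure_mono sdiff_subset).trans_lt measure_closedBall_lt_top).ne
  have hpt : ∀ x, ‖fderiv ℝ (plat c r ε) x‖ ≤
      (closedBall c (r + ε) \ ball c r).indicator (fun _ => ε⁻¹) x := by
    intro x
    by_cases hx : x ∈ closedBall c (r + ε) \ ball c r
    · rw [indicator_of_mem hx]
      have := norm_fderiv_le_of_lipschitz ℝ (plat_lip c r hε) (x₀ := x)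
      rwa [Real.coe_toNNReal _ (by positivity)] at this
    · rw [indicator_of_notMem hx]
      apply le_of_eq
      rw [norm_eq_zero]
      by_cases h1 : x ∈ closedBall c (r + ε)
      · have h2 : x ∈ ball c r := by
          by_contra h; exact hx ⟨h1, h⟩
        have : plat c r ε =ᶠ[𝓝 x] fun _ => 1 := by
          filter_upwards [isOpen_ball.mem_nhds h2] with y hy
          rw [mem_ball, dist_eq_norm] at hy
          exact plat_one hε hy.le
        rw [this.fderiv_eq]; simp
      · exact fderiv_zero_of_notMem (fun h => h1 (plat_tsupport c r hε h))
  have hi : Integrable ((closedBall c (r + ε) \ ball c r).indicator (fun _ => ε⁻¹)) :=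
    (integrable_indicator_iff hS).2 (integrableOn_const hfin)
  refine (integral_mono (integrable_grad1 (plat_lip c r hε) (plat_cpt c r hε)) hi hpt).trans ?_
  rw [integral_indicator_const _ hS, smul_eq_mul]
  have hv : volume.real (closedBall c (r + ε) \ ball c r) =
      ((r + ε) ^ N - r ^ N) * volume.real (ball (0 : EE N) 1) := by
    rw [measureReal_sdiff ((ball_subset_closedBall).trans (closedBall_subset_closedBall (by linarith)))
      measurableSet_ball measure_closedBall_lt_top.ne,
      vol_closedBall _ (by linarith), vol_ball _ hr]
    ring
  rw [hv]
  have h2 := pow_diff_le hr.le (show r ≤ r + ε by linarith) N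
  have h3 : ((r + ε) ^ N - r ^ N) * ε⁻¹ ≤ N * (r + ε) ^ (N - 1) := by
    rw [← div_eq_mul_inv, div_le_iff₀ hε]; simpa using h2
  have h4 : 0 ≤ volume.real (ball (0 : EE N) 1) := measureReal_nonneg
  calc _ = volume.real (ball (0 : EE N) 1) * (((r + ε) ^ N - r ^ N) * ε⁻¹) := by ring
    _ ≤ _ := mul_le_mul_of_nonneg_left h3 h4

lemma tendsto_int_rpow {N : ℕ} {f : EE N → ℝ} (h0 : ∀ x, 0 ≤ f x) (hm : Measurable f)
    (h1 : Integrable f) (h2 : Integrable (fun x => f x ^ (2 : ℝ))) :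
    Tendsto (fun p : ℝ => ∫ x, f x ^ p) (𝓝[>] 1) (𝓝 (∫ x, f x)) := by
  apply tendsto_integral_filter_of_dominated_convergence (fun x => f x + f x ^ (2 : ℝ))
  · exact Eventually.of_forall fun p => (hm.pow_const p).aestronglyMeasurable
  · have : ∀ᶠ p : ℝ in 𝓝[>] 1, p < 2 := nhdsWithin_le_nhds (Iio_mem_nhds one_lt_two)
    filter_upwards [this, self_mem_nhdsWithin] with p hp hp1
    refine Eventually.of_forall fun x => ?_
    have hp1' : 1 < p := hp1
    rw [Real.norm_of_nonneg (Real.rpow_nonneg (h0 x) _)]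
    have hx := h0 x
    have h3 := Real.rpow_nonneg hx 2
    rcases le_total (f x) 1 with h | h
    · have := Real.rpow_le_rpow_of_exponent_ge_of_imp hx h hp1'.le (by intro _ h5; linarith)
      rw [Real.rpow_one] at this
      linarith
    · have := Real.rpow_le_rpow_of_exponent_le h hp.le
      linarith
  · exact h1.add h2
  · refine Eventually.of_forall fun x => ?_
    have : ContinuousAt (fun p : ℝ => f x ^ p) 1 := by
      rcases (h0 x).eq_or_lt with h | h
      · rw [← h]
        exact Real.continuousAt_const_rpow' (by norm_num)
      · exact Real.continuousAt_const_rpow h.ne'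
    have h5 := this.tendsto
    rw [Real.rpow_one] at h5
    exact h5.mono_left nhdsWithin_le_nhds

lemma limit_bound {N : ℕ} {R₀ R₁ s l : ℝ} {w : EE N → ℝ} {C : NNReal}
    (hl : Tendsto (fun p : ℝ => lam1 p (Om N R₀ R₁ s)) (𝓝[>] 1) (𝓝 l))
    (hw : LipschitzWith C w) (hc : HasCompactSupport w) (hs : tsupport w ⊆ Om N R₀ R₁ s) :
    l * ∫ x, |w x| ≤ ∫ x, ‖fderiv ℝ w x‖ := by
  have t1 := tendsto_int_rpow (f := fun x => |w x|) (fun x => abs_nonneg _) hw.continuous.abs.measurable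
    (by simpa using integrable_pow one_pos hw.continuous hc) (integrable_pow two_pos hw.continuous hc)
  have t2 := tendsto_int_rpow (f := fun x => ‖fderiv ℝ w x‖) (fun x => norm_nonneg _)
    (measurable_fderiv ℝ w).norm (integrable_grad1 hw hc) (integrable_grad two_pos hw hc)
  apply le_of_tendsto_of_tendsto (hl.mul t1) t2
  filter_upwards [self_mem_nhdsWithin] with p hp
  exact lam1_mul_le_lip hp (isOpen_Om _ _ _ _) hw hc hs

open MeasureTheory Metric Set Filter
open scoped RealInnerProductSpace ENNReal Topology

noncomputable def phi {N : ℕ} (e : EE N) (a : ℝ) (x : EE N) : ℝ := clp (inner ℝ e x - a)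

lemma phi_nonneg {N : ℕ} (e : EE N) (a : ℝ) (x : EE N) : 0 ≤ phi e a x := clp_nonneg _
lemma phi_le_one {N : ℕ} (e : EE N) (a : ℝ) (x : EE N) : phi e a x ≤ 1 := clp_le_one _
lemma plat_nonneg {N : ℕ} (c : EE N) (r ε : ℝ) (x : EE N) : 0 ≤ plat c r ε x := clp_nonneg _
lemma plat_le_one {N : ℕ} (c : EE N) (r ε : ℝ) (x : EE N) : plat c r ε x ≤ 1 := clp_le_one _

lemma phi_lip {N : ℕ} {e : EE N} (he : ‖e‖ = 1) (a : ℝ) : LipschitzWith 1 (phi e a) := by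
  apply LipschitzWith.of_dist_le_mul
  intro x y
  refine (clp_lip.dist_le_mul _ _).trans ?_
  rw [NNReal.coe_one, one_mul, one_mul, Real.dist_eq, sub_sub_sub_cancel_right, ← inner_sub_right, dist_eq_norm]
  have := abs_real_inner_le_norm e (x - y)
  rwa [he, one_mul] at this

lemma phi_line {N : ℕ} {e : EE N} (he : ‖e‖ = 1) (a : ℝ) (x : EE N) (t : ℝ) :
    phi e a (x + t • e) = clp (inner ℝ e x + t - a) := by
  unfold phi
  rw [inner_add_right, inner_smul_right, real_inner_self_eq_norm_sq, he]; simp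

lemma phi_d_nonneg {N : ℕ} {e : EE N} (he : ‖e‖ = 1) (a : ℝ) (x : EE N) :
    0 ≤ lineDeriv ℝ (phi e a) x e := by
  unfold lineDeriv
  apply Monotone.deriv_nonneg
  intro s t hst
  simp only [phi_line he]
  exact clp_mono (by linarith)

lemma phi_d_one {N : ℕ} {e : EE N} (he : ‖e‖ = 1) {a : ℝ} {x : EE N} (h0 : a < inner ℝ e x)
    (h1 : inner ℝ e x < a + 1) : lineDeriv ℝ (phi e a) x e = 1 := by
  unfold lineDeriv
  simp only [phi_line he]
  have : (fun t : ℝ => clp (inner ℝ e x + t - a)) =ᶠ[𝓝 0] fun t => t + (inner ℝ e x - a) := by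
    have h2 : ∀ᶠ t : ℝ in 𝓝 0, a - inner ℝ e x < t := lt_mem_nhds (by linarith)
    have h3 : ∀ᶠ t : ℝ in 𝓝 0, t < a + 1 - inner ℝ e x := gt_mem_nhds (by linarith)
    filter_upwards [h2, h3] with t h2 h3
    rw [clp_of_mem (by linarith) (by linarith)]; ring
  rw [this.deriv_eq]
  simp

lemma phi_grad {N : ℕ} {e : EE N} (he : ‖e‖ = 1) {a : ℝ} {x : EE N}
    (hd : DifferentiableAt ℝ (phi e a) x) : ‖fderiv ℝ (phi e a) x‖ ≤ lineDeriv ℝ (phi e a) x e := by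
  have h0 := phi_d_nonneg he a x
  have hv : ∀ v, fderiv ℝ (phi e a) x v = inner ℝ e v * lineDeriv ℝ (phi e a) x e := by
    intro v
    have : lineDeriv ℝ (phi e a) x v = lineDeriv ℝ (phi e a) x (inner ℝ e v • e) := by
      unfold lineDeriv
      congr 1
      funext t
      unfold phi
      simp only [inner_add_right, inner_smul_right, real_inner_self_eq_norm_sq, he]
      simp
    rw [← hd.lineDeriv_eq_fderiv, this, hd.lineDeriv_eq_fderiv, map_smul, ← hd.lineDeriv_eq_fderiv, smul_eq_mul]
  apply ContinuousLinearMap.opNorm_le_bound _ h0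
  intro v
  rw [hv, norm_mul, Real.norm_of_nonneg h0, mul_comm]
  apply mul_le_mul_of_nonneg_left _ h0
  have := abs_real_inner_le_norm e v
  rwa [he, one_mul] at this

lemma lip_mul {N : ℕ} {f g : EE N → ℝ} {A B : NNReal} (hf : LipschitzWith A f) (hg : LipschitzWith B g)
    (h1 : ∀ x, |f x| ≤ 1) (h2 : ∀ x, |g x| ≤ 1) : LipschitzWith (A + B) (fun x => f x * g x) := by
  apply LipschitzWith.of_dist_le_mul
  intro x y
  have a1 := hf.dist_le_mul x y
  have a2 := hg.dist_le_mul x y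
  rw [Real.dist_eq] at *
  have e : f x * g x - f y * g y = (f x - f y) * g x + f y * (g x - g y) := by ring
  rw [e]
  refine (abs_add_le _ _).trans ?_
  rw [abs_mul, abs_mul, NNReal.coe_add, add_mul]
  apply add_le_add
  · calc _ ≤ |f x - f y| * 1 := mul_le_mul_of_nonneg_left (h2 x) (abs_nonneg _)
      _ ≤ _ := by rw [mul_one]; exact a1
  · calc _ ≤ 1 * |g x - g y| := mul_le_mul_of_nonneg_right (h1 y) (abs_nonneg _)
      _ ≤ _ := by rw [one_mul]; exact a2

/-- integration by parts estimate -/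
lemma ibp_est {N : ℕ} {e : EE N} (he : ‖e‖ = 1) (a : ℝ) {v : EE N → ℝ} {C : NNReal}
    (hv : LipschitzWith C v) (hc : HasCompactSupport v) :
    Integrable (fun x => lineDeriv ℝ (phi e a) x e * v x) ∧
    Integrable (fun x => ‖fderiv ℝ v x‖ * phi e a x) ∧
    ∫ x, lineDeriv ℝ (phi e a) x e * v x ≤ ∫ x, ‖fderiv ℝ v x‖ * phi e a x := by
  have hφ := phi_lip he a
  have i1 : Integrable (fun x => lineDeriv ℝ (phi e a) x e * v x) := by
    apply Integrable.bdd_mul (c := 1) (hv.continuous.integrable_of_hasCompactSupport hc)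
    · exact (measurable_lineDeriv hφ.continuous).aestronglyMeasurable
    · refine Eventually.of_forall fun x => ?_
      have := norm_lineDeriv_le_of_lipschitz ℝ hφ (x₀ := x) (v := e)
      simpa [he] using this
  have i2 : Integrable (fun x => ‖fderiv ℝ v x‖ * phi e a x) := by
    apply Integrable.mul_bdd (c := 1) (integrable_grad1 hv hc)
    · exact hφ.continuous.aestronglyMeasurable
    · refine Eventually.of_forall fun x => ?_
      rw [Real.norm_of_nonneg (phi_nonneg _ _ _)]
      exact clp_le_one _
  refine ⟨i1, i2, ?_⟩
  rw [hφ.integral_lineDeriv_mul_eq hv hc]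
  apply integral_mono_ae _ i2
  · filter_upwards [hv.ae_differentiableAt] with x hx
    apply mul_le_mul_of_nonneg_right _ (clp_nonneg _)
    rw [hx.lineDeriv_eq_fderiv]
    refine (le_abs_self _).trans ?_
    have := (fderiv ℝ v x).le_opNorm (-e)
    rwa [norm_neg, he, mul_one] at this
  · apply i2.mono
    · exact ((measurable_lineDeriv hv.continuous).mul hφ.continuous.measurable).aestronglyMeasurable
    · filter_upwards [hv.ae_differentiableAt] with x hx
      rw [norm_mul, norm_mul, norm_norm]
      apply mul_le_mul_of_nonneg_right _ (norm_nonneg _)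
      rw [hx.lineDeriv_eq_fderiv]
      have := (fderiv ℝ v x).le_opNorm (-e)
      rwa [norm_neg, he, mul_one] at this

open MeasureTheory Metric Set Filter
open scoped RealInnerProductSpace ENNReal Topology

lemma test_fun {N : ℕ} {e : EE N} (he : ‖e‖ = 1) {R₀ R₁ τ ε : ℝ} (hR₀ : 0 < R₀)
    (hτ0 : 0 < τ) (hτ1 : τ < 1) (hε : 0 < ε) (hε1 : 2 * ε < R₁) :
    ∃ (w : EE N → ℝ) (C : NNReal), LipschitzWith C w ∧ HasCompactSupport w ∧
      (∀ x ∈ tsupport w, ‖x‖ ≤ R₁ - ε ∧ R₀ + ε ≤ ‖x - (R₁ - R₀) • e‖) ∧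
      ∫ x, ‖fderiv ℝ w x‖ ≤ volume.real (ball (0 : EE N) 1) * (N * (R₁ - ε) ^ (N - 1)) +
        volume.real (ball (0 : EE N) 1) * (N * (R₀ + 2 * ε) ^ (N - 1)) -
        volume.real (ball ((R₁ - R₀) • e) R₀ ∩ {x | R₁ - τ < inner ℝ e x}) ∧
      (R₁ - 2 * ε) ^ N * volume.real (ball (0 : EE N) 1) -
        (R₀ + 2 * ε) ^ N * volume.real (ball (0 : EE N) 1) -
        τ * volume.real (ball 0 R₁ ∩ {x | R₁ - τ < inner ℝ e x}) ≤ ∫ x, |w x| := by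
  set a := R₁ - τ with ha
  set c := (R₁ - R₀) • e with hc
  set v1 : EE N → ℝ := plat 0 (R₁ - 2 * ε) ε with hv1
  set v2 : EE N → ℝ := plat c (R₀ + ε) ε with hv2
  have L1 : LipschitzWith _ v1 := plat_lip 0 (R₁ - 2 * ε) hε
  have L2 : LipschitzWith _ v2 := plat_lip c (R₀ + ε) hε
  have C1 : HasCompactSupport v1 := plat_cpt 0 (R₁ - 2 * ε) hε
  have C2 : HasCompactSupport v2 := plat_cpt c (R₀ + ε) hε
  have a1 : ∀ x, 0 ≤ v1 x := plat_nonneg _ _ _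
  have b1 : ∀ x, v1 x ≤ 1 := plat_le_one _ _ _
  have a2 : ∀ x, 0 ≤ v2 x := plat_nonneg _ _ _
  have b2 : ∀ x, v2 x ≤ 1 := plat_le_one _ _ _
  have a3 : ∀ x, 0 ≤ phi e a x := phi_nonneg _ _
  have b3 : ∀ x, phi e a x ≤ 1 := phi_le_one _ _
  have Lφ := phi_lip he a
  have L2' : LipschitzWith (0 + Real.toNNReal ε⁻¹) (fun x => 1 - v2 x) := (LipschitzWith.const 1).sub L2
  have Lφ' : LipschitzWith (0 + 1) (fun x => 1 - phi e a x) := (LipschitzWith.const 1).sub Lφ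
  have L12 : LipschitzWith (Real.toNNReal ε⁻¹ + (0 + Real.toNNReal ε⁻¹)) (fun x => v1 x * (1 - v2 x)) := by
    apply lip_mul L1 L2'
    · intro x; rw [abs_of_nonneg (a1 x)]; exact b1 x
    · intro x; rw [abs_of_nonneg (by linarith [b2 x])]; linarith [a2 x]
  have a12 : ∀ x, 0 ≤ v1 x * (1 - v2 x) := fun x => mul_nonneg (a1 x) (by linarith [b2 x])
  have b12 : ∀ x, v1 x * (1 - v2 x) ≤ 1 := fun x => by nlinarith [a1 x, b1 x, a2 x, b2 x]
  set w : EE N → ℝ := fun x => v1 x * (1 - v2 x) * (1 - phi e a x) with hw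
  have hw0 : ∀ x, 0 ≤ w x := fun x => mul_nonneg (a12 x) (by linarith [b3 x])
  have Lw : LipschitzWith (Real.toNNReal ε⁻¹ + (0 + Real.toNNReal ε⁻¹) + (0 + 1)) w := by
    apply lip_mul L12 Lφ'
    · intro x; rw [abs_of_nonneg (a12 x)]; exact b12 x
    · intro x; rw [abs_of_nonneg (by linarith [b3 x])]; linarith [a3 x]
  have Cw : HasCompactSupport w := by
    apply C1.mono
    intro x hx h0
    apply hx
    simp only [hw]
    rw [h0]; simp
  refine ⟨w, _, Lw, Cw, ?_, ?_, ?_⟩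
  · have hcl : IsClosed {x : EE N | ‖x‖ ≤ R₁ - ε ∧ R₀ + ε ≤ ‖x - c‖} :=
      (isClosed_le continuous_norm continuous_const).inter
        (isClosed_le continuous_const (continuous_id.sub continuous_const).norm)
    have : tsupport w ⊆ {x : EE N | ‖x‖ ≤ R₁ - ε ∧ R₀ + ε ≤ ‖x - c‖} := by
      apply closure_minimal _ hcl
      intro x hx
      constructor
      · by_contra h
        apply hx
        have : v1 x = 0 := plat_zero hε (by rw [sub_zero]; linarith [not_le.1 h])
        simp [hw, this]
      · by_contra h
        apply hx
        have : v2 x = 1 := plat_one hε (not_le.1 h).le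
        simp [hw, this]
    exact fun x hx => this hx
  · obtain ⟨i1, j1, k1⟩ := ibp_est he a L1 C1
    obtain ⟨i2, j2, k2⟩ := ibp_est he a L2 C2
    have g1 := integrable_grad1 L1 C1
    have g2 := integrable_grad1 L2 C2
    have gw := integrable_grad1 Lw Cw
    have m1 : ∫ x, ‖fderiv ℝ v1 x‖ ≤ _ := plat_grad (0 : EE N) (r := R₁ - 2 * ε) (by linarith) hε
    have m2 : ∫ x, ‖fderiv ℝ v2 x‖ ≤ _ := plat_grad c (r := R₀ + ε) (by linarith) hε
    have e1 : R₁ - 2 * ε + ε = R₁ - ε := by ring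
    have e2 : R₀ + ε + ε = R₀ + 2 * ε := by ring
    rw [e1] at m1
    rw [e2] at m2
    have hle : ∀ᵐ x, ‖fderiv ℝ w x‖ ≤ (‖fderiv ℝ v1 x‖ - ‖fderiv ℝ v1 x‖ * phi e a x) +
        ((‖fderiv ℝ v2 x‖ - ‖fderiv ℝ v2 x‖ * phi e a x) + lineDeriv ℝ (phi e a) x e * v1 x) := by
      filter_upwards [L1.ae_differentiableAt, L2.ae_differentiableAt, Lφ.ae_differentiableAt] with x d1 d2 d3
      have hD : fderiv ℝ w x = (v1 x * (1 - v2 x)) • (-fderiv ℝ (phi e a) x) +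
          (1 - phi e a x) • (v1 x • (-fderiv ℝ v2 x) + (1 - v2 x) • fderiv ℝ v1 x) := by
        have q2 := d2.hasFDerivAt.const_sub 1
        have q3 := d3.hasFDerivAt.const_sub 1
        exact ((d1.hasFDerivAt.mul q2).mul q3).fderiv
      have q := phi_grad he d3
      rw [hD]
      refine (norm_add_le _ _).trans ?_
      rw [norm_smul, norm_smul, norm_neg, Real.norm_of_nonneg (a12 x),
        Real.norm_of_nonneg (show 0 ≤ 1 - phi e a x by linarith [b3 x])]
      have q4 : ‖v1 x • (-fderiv ℝ v2 x) + (1 - v2 x) • fderiv ℝ v1 x‖ ≤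
          ‖fderiv ℝ v1 x‖ + ‖fderiv ℝ v2 x‖ := by
        refine (norm_add_le _ _).trans ?_
        rw [norm_smul, norm_smul, norm_neg, Real.norm_of_nonneg (a1 x),
          Real.norm_of_nonneg (show 0 ≤ 1 - v2 x by linarith [b2 x])]
        have := norm_nonneg (fderiv ℝ v1 x)
        have := norm_nonneg (fderiv ℝ v2 x)
        nlinarith [a1 x, b1 x, a2 x, b2 x]
      have q5 := mul_le_mul_of_nonneg_left q4 (show 0 ≤ 1 - phi e a x by linarith [b3 x])
      have q6 : v1 x * (1 - v2 x) * ‖fderiv ℝ (phi e a) x‖ ≤ lineDeriv ℝ (phi e a) x e * v1 x := by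
        calc _ ≤ v1 x * ‖fderiv ℝ (phi e a) x‖ :=
              mul_le_mul_of_nonneg_right (by nlinarith [a1 x, a2 x]) (norm_nonneg _)
          _ ≤ v1 x * lineDeriv ℝ (phi e a) x e := mul_le_mul_of_nonneg_left q (a1 x)
          _ = _ := mul_comm _ _
      linarith
    have hi := integral_mono_ae gw ((g1.sub j1).add ((g2.sub j2).add i1)) hle
    have hval : ∫ x, ((fun x => ‖fderiv ℝ v1 x‖ - ‖fderiv ℝ v1 x‖ * phi e a x) +
        ((fun x => ‖fderiv ℝ v2 x‖ - ‖fderiv ℝ v2 x‖ * phi e a x) +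
          fun x => lineDeriv ℝ (phi e a) x e * v1 x)) x =
        ((∫ x, ‖fderiv ℝ v1 x‖) - ∫ x, ‖fderiv ℝ v1 x‖ * phi e a x) +
        (((∫ x, ‖fderiv ℝ v2 x‖) - ∫ x, ‖fderiv ℝ v2 x‖ * phi e a x) +
          ∫ x, lineDeriv ℝ (phi e a) x e * v1 x) := by
      have z1 : Integrable (fun x => ‖fderiv ℝ v1 x‖ - ‖fderiv ℝ v1 x‖ * phi e a x) := g1.sub j1
      have z2 : Integrable (fun x => ‖fderiv ℝ v2 x‖ - ‖fderiv ℝ v2 x‖ * phi e a x) := g2.sub j2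
      rw [← integral_sub g1 j1, ← integral_sub g2 j2, ← integral_add z2 i1]
      exact integral_add z1 (z2.add i1)
    have hi' := hi.trans_eq hval
    have hS : MeasurableSet (ball c R₀ ∩ {x | a < inner ℝ e x}) :=
      measurableSet_ball.inter (isOpen_lt continuous_const (by fun_prop)).measurableSet
    have hSf : volume (ball c R₀ ∩ {x | a < inner ℝ e x}) ≠ ∞ :=
      ((measure_mono inter_subset_left).trans_lt measure_ball_lt_top).ne
    have hγ : volume.real (ball c R₀ ∩ {x | a < inner ℝ e x}) ≤ ∫ x, lineDeriv ℝ (phi e a) x e * v2 x := by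
      have h1 : ∫ x, (ball c R₀ ∩ {x | a < inner ℝ e x}).indicator (fun _ => (1:ℝ)) x =
          volume.real (ball c R₀ ∩ {x | a < inner ℝ e x}) := by
        rw [integral_indicator_const _ hS]; simp
      rw [← h1]
      apply integral_mono ((integrable_indicator_iff hS).2 (integrableOn_const hSf)) i2
      intro x
      by_cases hx : x ∈ ball c R₀ ∩ {x | a < inner ℝ e x}
      · rw [indicator_of_mem hx]
        have hx1 : ‖x - c‖ < R₀ := by
          have := hx.1; rwa [mem_ball, dist_eq_norm] at this
        have h2 : v2 x = 1 := plat_one hε (by linarith)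
        have h3 : inner ℝ e x < a + 1 := by
          have h4 : inner ℝ e x = inner ℝ e (x - c) + (R₁ - R₀) := by
            rw [inner_sub_right, hc, inner_smul_right, real_inner_self_eq_norm_sq, he]; ring
          have h5 := real_inner_le_norm e (x - c)
          rw [he, one_mul] at h5
          rw [h4]; linarith
        show 1 ≤ lineDeriv ℝ (phi e a) x e * v2 x
        rw [h2, phi_d_one he hx.2 h3, mul_one]
      · rw [indicator_of_notMem hx]
        exact mul_nonneg (phi_d_nonneg he a x) (a2 x)
    linarith
  · have hS : MeasurableSet (ball (0 : EE N) R₁ ∩ {x | a < inner ℝ e x}) :=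
      measurableSet_ball.inter (isOpen_lt continuous_const (by fun_prop)).measurableSet
    have hSf : volume (ball (0 : EE N) R₁ ∩ {x | a < inner ℝ e x}) ≠ ∞ :=
      ((measure_mono inter_subset_left).trans_lt measure_ball_lt_top).ne
    set S := (ball (0 : EE N) R₁ ∩ {x | a < inner ℝ e x})
    have I1 : Integrable ((closedBall (0 : EE N) (R₁ - 2 * ε)).indicator (fun _ => (1:ℝ))) :=
      (integrable_indicator_iff measurableSet_closedBall).2 (integrableOn_const measure_closedBall_lt_top.ne)
    have I2 : Integrable ((closedBall c (R₀ + 2 * ε)).indicator (fun _ => (1:ℝ))) :=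
      (integrable_indicator_iff measurableSet_closedBall).2 (integrableOn_const measure_closedBall_lt_top.ne)
    have I3 : Integrable (S.indicator (fun _ => τ)) :=
      (integrable_indicator_iff hS).2 (integrableOn_const hSf)
    have hval : ∫ x, ((closedBall (0 : EE N) (R₁ - 2 * ε)).indicator (fun _ => (1:ℝ)) x -
        (closedBall c (R₀ + 2 * ε)).indicator (fun _ => (1:ℝ)) x - S.indicator (fun _ => τ) x) =
        (R₁ - 2 * ε) ^ N * volume.real (ball (0 : EE N) 1) -
        (R₀ + 2 * ε) ^ N * volume.real (ball (0 : EE N) 1) - τ * volume.real S := by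
      rw [← vol_closedBall (0 : EE N) (by linarith), ← vol_closedBall c (by linarith)]
      have h1 := integral_sub (I1.sub I2) I3
      have h2 := integral_sub I1 I2
      rw [integral_indicator_const _ measurableSet_closedBall, integral_indicator_const _ measurableSet_closedBall] at h2
      rw [integral_indicator_const _ hS] at h1
      simp only [smul_eq_mul, mul_one, Pi.sub_apply] at h1 h2
      rw [h1, h2]; ring
    rw [← hval]
    have iw : Integrable (fun x => |w x|) := by simpa using integrable_pow one_pos Lw.continuous Cw
    apply integral_mono ((I1.sub I2).sub I3) iw
    intro x
    simp only [Pi.sub_apply]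
    rw [abs_of_nonneg (hw0 x)]
    have hx0 := hw0 x
    have n2 : 0 ≤ (closedBall c (R₀ + 2 * ε)).indicator (fun _ => (1:ℝ)) x :=
      indicator_nonneg (fun _ _ => zero_le_one) x
    have n3 : 0 ≤ S.indicator (fun _ => τ) x := indicator_nonneg (fun _ _ => hτ0.le) x
    by_cases h1 : x ∈ closedBall (0 : EE N) (R₁ - 2 * ε)
    · rw [indicator_of_mem h1]
      by_cases h2 : x ∈ closedBall c (R₀ + 2 * ε)
      · rw [indicator_of_mem h2]; linarith
      · rw [indicator_of_notMem h2]
        rw [mem_closedBall, dist_eq_norm] at h1 h2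
        have e1 : v1 x = 1 := plat_one hε h1
        have e2 : v2 x = 0 := plat_zero hε (by linarith [not_le.1 h2])
        have e3 : w x = 1 - phi e a x := by simp [hw, e1, e2]
        rw [e3]
        have h5 := real_inner_le_norm e x
        rw [he, one_mul] at h5
        rw [sub_zero] at h1
        have : phi e a x ≤ S.indicator (fun _ => τ) x := by
          by_cases h3 : x ∈ S
          · rw [indicator_of_mem h3]
            have h4 : a < inner ℝ e x := h3.2
            unfold phi
            rw [clp_of_mem (by linarith) (by linarith)]
            linarith
          · rw [indicator_of_notMem h3]
            have : ¬ a < inner ℝ e x := by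
              intro h4
              exact h3 ⟨by rw [mem_ball_zero_iff]; linarith, h4⟩
            unfold phi
            rw [clp_of_le (by linarith [not_lt.1 this])]
        linarith
    · rw [indicator_of_notMem h1]; linarith

open MeasureTheory Metric Set Filter
open scoped RealInnerProductSpace ENNReal Topology

lemma cap_scale {N : ℕ} {e : EE N} (he : ‖e‖ = 1) {R₀ R₁ τ : ℝ} (hR₀ : 0 < R₀) (hR : R₀ < R₁)
    (hτ0 : 0 < τ) :
    (R₀ / R₁) ^ N * volume.real (ball 0 R₁ ∩ {x | R₁ - τ < inner ℝ e x}) ≤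
      volume.real (ball ((R₁ - R₀) • e) R₀ ∩ {x | R₁ - τ < inner ℝ e x}) := by
  have hR1 : 0 < R₁ := by linarith
  have hk0 : 0 < R₀ / R₁ := by positivity
  have hk1 : R₀ / R₁ < 1 := by rw [div_lt_one hR1]; exact hR
  have hkR : R₀ / R₁ * R₁ = R₀ := by field_simp
  have hsub : AffineMap.homothety (R₁ • e) (R₀ / R₁) '' (ball 0 R₁ ∩ {x | R₁ - τ < inner ℝ e x}) ⊆
      ball ((R₁ - R₀) • e) R₀ ∩ {x | R₁ - τ < inner ℝ e x} := by
    rintro _ ⟨x, ⟨hx1, hx2⟩, rfl⟩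
    rw [mem_ball_zero_iff] at hx1
    have hx2' : R₁ - τ < inner ℝ e x := hx2
    set k := R₀ / R₁ with hk
    have e0 : AffineMap.homothety (R₁ • e) k x = k • x + (R₁ - R₀) • e := by
      rw [AffineMap.homothety_apply, vsub_eq_sub, vadd_eq_add, smul_sub, smul_smul, hkR, sub_smul]
      abel
    rw [e0]
    constructor
    · rw [mem_ball, dist_eq_norm, add_sub_cancel_right, norm_smul, Real.norm_of_nonneg hk0.le]
      calc k * ‖x‖ < k * R₁ := mul_lt_mul_of_pos_left hx1 hk0
        _ = R₀ := hkR
    · show R₁ - τ < inner ℝ e _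
      rw [inner_add_right, inner_smul_right, inner_smul_right, real_inner_self_eq_norm_sq, he]
      nlinarith
  have hm := measure_mono (μ := volume) hsub
  rw [Measure.addHaar_image_homothety] at hm
  have hfin : volume (ball ((R₁ - R₀) • e) R₀ ∩ {x | R₁ - τ < inner ℝ e x}) ≠ ∞ :=
    ((measure_mono inter_subset_left).trans_lt measure_ball_lt_top).ne
  have h2 := ENNReal.toReal_mono hfin hm
  rw [ENNReal.toReal_mul, ENNReal.toReal_ofReal (abs_nonneg _), abs_of_nonneg (by positivity)] at h2
  simpa [measureReal_def] using h2

lemma cap_pos {N : ℕ} {e : EE N} (he : ‖e‖ = 1) {R₁ τ : ℝ} (hR₁ : 0 < R₁)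
    (hτ0 : 0 < τ) (hτ : τ < R₁) :
    0 < volume.real (ball 0 R₁ ∩ {x | R₁ - τ < inner ℝ e x}) := by
  have hfin : volume (ball (0 : EE N) R₁ ∩ {x | R₁ - τ < inner ℝ e x}) ≠ ∞ :=
    ((measure_mono inter_subset_left).trans_lt measure_ball_lt_top).ne
  rw [measureReal_def]
  apply ENNReal.toReal_pos _ hfin
  apply ne_of_gt
  apply IsOpen.measure_pos
  · exact isOpen_ball.inter (isOpen_lt continuous_const (by fun_prop))
  · refine ⟨(R₁ - τ / 2) • e, ?_, ?_⟩
    · rw [mem_ball_zero_iff, norm_smul, he, Real.norm_of_nonneg (by linarith)]; linarith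
    · show R₁ - τ < inner ℝ e _
      rw [inner_smul_right, real_inner_self_eq_norm_sq, he]; linarith

lemma hC_pos {N : ℕ} (hN : 2 ≤ N) {R₀ R₁ : ℝ} (hR₀ : 0 < R₀) (hR : R₀ < R₁) :
    0 < hC N R₀ R₁ ∧ hC N R₀ R₁ * (R₁ ^ N - R₀ ^ N) = N * (R₁ ^ (N - 1) + R₀ ^ (N - 1)) := by
  have hD : 0 < R₁ ^ N - R₀ ^ N := by
    have := pow_lt_pow_left₀ hR hR₀.le (show N ≠ 0 by omega)
    linarith
  have hR1 : 0 < R₁ := by linarith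
  have hN0 : (0:ℝ) < N := by exact_mod_cast (show 0 < N by omega)
  unfold hC
  constructor
  · positivity
  · field_simp

lemma exists_lt {N : ℕ} (hN : 2 ≤ N) {R₀ R₁ : ℝ} (hR₀ : 0 < R₀) (hR : R₀ < R₁)
    (Λ : ℝ → ℝ)
    (hΛ : ∀ s ∈ Set.Ico 0 (R₁ - R₀),
      Tendsto (fun p : ℝ => lam1 p (Om N R₀ R₁ s)) (𝓝[>] 1) (𝓝 (Λ s))) :
    ∃ s ∈ Set.Ico 0 (R₁ - R₀), Λ s < hC N R₀ R₁ := by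
  by_contra hcon
  push Not at hcon
  have he : ‖e1 N‖ = 1 := e1_norm hN
  have hR1 : 0 < R₁ := by linarith
  obtain ⟨hp, hid⟩ := hC_pos hN hR₀ hR
  set h := hC N R₀ R₁ with hh
  set ω := volume.real (ball (0 : EE N) 1) with hω
  have hω0 : 0 ≤ ω := measureReal_nonneg
  set k := (R₀ / R₁) ^ N with hk
  have hk0 : 0 < k := by positivity
  obtain ⟨τ, hτ0, hτm⟩ : ∃ τ > 0, τ < min (min 1 R₁) (k / h) :=
    exists_between (lt_min (lt_min one_pos hR1) (by positivity))
  have hτ1 : τ < 1 := hτm.trans_le ((min_le_left _ _).trans (min_le_left _ _))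
  have hτR : τ < R₁ := hτm.trans_le ((min_le_left _ _).trans (min_le_right _ _))
  have hτk : τ < k / h := hτm.trans_le (min_le_right _ _)
  rw [lt_div_iff₀ hp] at hτk
  have hβ := cap_pos he hR1 hτ0 hτR
  have hγ := cap_scale he hR₀ hR hτ0
  set β := volume.real (ball 0 R₁ ∩ {x | R₁ - τ < inner ℝ (e1 N) x})
  set γ := volume.real (ball ((R₁ - R₀) • e1 N) R₀ ∩ {x | R₁ - τ < inner ℝ (e1 N) x})
  have key : ∀ᶠ ε in 𝓝[>] (0:ℝ), h * ((R₁ - 2 * ε) ^ N * ω - (R₀ + 2 * ε) ^ N * ω - τ * β) ≤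
      ω * (N * (R₁ - ε) ^ (N - 1)) + ω * (N * (R₀ + 2 * ε) ^ (N - 1)) - γ := by
    have h1 : ∀ᶠ ε in 𝓝[>] (0:ℝ), ε < R₁ / 2 := nhdsWithin_le_nhds (gt_mem_nhds (by linarith))
    filter_upwards [self_mem_nhdsWithin, h1] with ε hε hε1
    have hε : 0 < ε := hε
    obtain ⟨w, C, Lw, Cw, hs, hgrad, hintg⟩ := test_fun he hR₀ hτ0 hτ1 hε (show 2 * ε < R₁ by linarith)
    obtain ⟨s, hs1, hs2⟩ : ∃ s, max 0 (R₁ - R₀ - ε) < s ∧ s < R₁ - R₀ :=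
      exists_between (max_lt (by linarith) (by linarith))
    have hs0 : 0 < s := (le_max_left _ _).trans_lt hs1
    have hsε : R₁ - R₀ - ε < s := (le_max_right _ _).trans_lt hs1
    have hmem : s ∈ Ico 0 (R₁ - R₀) := ⟨hs0.le, hs2⟩
    have hsub : tsupport w ⊆ Om N R₀ R₁ s := by
      intro x hx
      obtain ⟨q1, q2⟩ := hs x hx
      refine (mem_Om hR₀ x).2 ⟨by linarith, ?_⟩
      have e : x - (R₁ - R₀) • e1 N = (x - s • e1 N) - (R₁ - R₀ - s) • e1 N := by
        rw [sub_smul (R₁ - R₀)]; abel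
      have q3 := norm_sub_le (x - s • e1 N) ((R₁ - R₀ - s) • e1 N)
      rw [← e, norm_smul, he, Real.norm_of_nonneg (by linarith)] at q3
      linarith
    have hb := limit_bound (hΛ s hmem) Lw Cw hsub
    have hI : 0 ≤ ∫ x, |w x| := integral_nonneg fun _ => abs_nonneg _
    calc _ ≤ h * ∫ x, |w x| := mul_le_mul_of_nonneg_left hintg hp.le
      _ ≤ Λ s * ∫ x, |w x| := mul_le_mul_of_nonneg_right (hcon s hmem) hI
      _ ≤ _ := hb
      _ ≤ _ := hgrad
  have T1 : Tendsto (fun ε : ℝ => h * ((R₁ - 2 * ε) ^ N * ω - (R₀ + 2 * ε) ^ N * ω - τ * β)) (𝓝[>] 0)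
      (𝓝 (h * ((R₁ - 2 * 0) ^ N * ω - (R₀ + 2 * 0) ^ N * ω - τ * β))) :=
    (Continuous.tendsto (by fun_prop) 0).mono_left nhdsWithin_le_nhds
  have T2 : Tendsto (fun ε : ℝ => ω * (N * (R₁ - ε) ^ (N - 1)) + ω * (N * (R₀ + 2 * ε) ^ (N - 1)) - γ) (𝓝[>] 0)
      (𝓝 (ω * (N * (R₁ - 0) ^ (N - 1)) + ω * (N * (R₀ + 2 * 0) ^ (N - 1)) - γ)) :=
    (Continuous.tendsto (by fun_prop) 0).mono_left nhdsWithin_le_nhds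
  have hfin := le_of_tendsto_of_tendsto T1 T2 key
  simp only [mul_zero, sub_zero, add_zero] at hfin
  have e1 : h * (R₁ ^ N * ω - R₀ ^ N * ω - τ * β) = ω * (h * (R₁ ^ N - R₀ ^ N)) - (τ * h) * β := by ring
  rw [e1, hid] at hfin
  nlinarith

lemma lam_continuousOn {N : ℕ} (hN : 2 ≤ N) {R₀ R₁ : ℝ} (hR₀ : 0 < R₀) (hR : R₀ < R₁)
    (Λ : ℝ → ℝ)
    (hΛ : ∀ s ∈ Set.Ico 0 (R₁ - R₀),
      Tendsto (fun p : ℝ => lam1 p (Om N R₀ R₁ s)) (𝓝[>] 1) (𝓝 (Λ s))) :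
    ContinuousOn Λ (Set.Ico 0 (R₁ - R₀)) := by
  intro s₀ hs₀
  have hmain : ∀ ε : ℝ, 0 < ε → ε < 1 → ∀ᶠ s in 𝓝[Ico 0 (R₁ - R₀)] s₀,
      (1 - ε) * Λ s ≤ (1 + ε) * (1 + ε) * Λ s₀ ∧ (1 - ε) * Λ s₀ ≤ (1 + ε) * (1 + ε) * Λ s := by
    intro ε hε hε1
    obtain ⟨δ, hδ, H⟩ := lam1_near hN hR₀ hR hs₀.1 hs₀.2 hε hε1
    have h1 : ∀ᶠ s in 𝓝[Ico 0 (R₁ - R₀)] s₀, s ∈ ball s₀ δ := nhdsWithin_le_nhds (ball_mem_nhds _ hδ)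
    have hlim : ∀ s ∈ Ico 0 (R₁ - R₀), ∀ t ∈ Ico 0 (R₁ - R₀), |s - s₀| < δ → |t - s₀| < δ →
        (1 - ε) * Λ s ≤ (1 + ε) * (1 + ε) * Λ t := by
      intro s hs t ht hsd htd
      have T0 : Tendsto (fun p : ℝ => (1 + ε) ^ p) (𝓝[>] 1) (𝓝 (1 + ε)) := by
        have := (Real.continuousAt_const_rpow (a := 1 + ε) (b := 1) (by linarith)).tendsto
        rw [Real.rpow_one] at this
        exact this.mono_left nhdsWithin_le_nhds
      apply le_of_tendsto_of_tendsto ((hΛ s hs).const_mul (1 - ε)) ((T0.const_mul (1 + ε)).mul (hΛ t ht))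
      filter_upwards [self_mem_nhdsWithin] with p hp
      exact H s t hs.1 ht.1 hsd htd p hp
    filter_upwards [h1, self_mem_nhdsWithin] with s hs hs'
    rw [mem_ball, Real.dist_eq] at hs
    exact ⟨hlim s hs' s₀ hs₀ hs (by simpa using hδ), hlim s₀ hs₀ s hs' (by simpa using hδ) hs⟩
  have hΛ0 : 0 ≤ Λ s₀ := ge_of_tendsto' (hΛ s₀ hs₀) (fun p => lam1_nonneg _ _)
  set M := Λ s₀ with hM
  -- squeeze
  rw [ContinuousWithinAt, tendsto_order]
  have hU : Tendsto (fun ε : ℝ => (1 + ε) * (1 + ε) * M / (1 - ε)) (𝓝[>] 0) (𝓝 M) := by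
    have : ContinuousAt (fun ε : ℝ => (1 + ε) * (1 + ε) * M / (1 - ε)) 0 :=
      ContinuousAt.div (by fun_prop) (by fun_prop) (by norm_num)
    have h2 := this.tendsto.mono_left (nhdsWithin_le_nhds (s := Ioi 0))
    simpa using h2
  have hL : Tendsto (fun ε : ℝ => (1 - ε) * M / ((1 + ε) * (1 + ε))) (𝓝[>] 0) (𝓝 M) := by
    have : ContinuousAt (fun ε : ℝ => (1 - ε) * M / ((1 + ε) * (1 + ε))) 0 :=
      ContinuousAt.div (by fun_prop) (by fun_prop) (by norm_num)
    have h2 := this.tendsto.mono_left (nhdsWithin_le_nhds (s := Ioi 0))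
    simpa using h2
  have h1 : ∀ᶠ ε in 𝓝[>] (0:ℝ), ε < 1 := nhdsWithin_le_nhds (gt_mem_nhds one_pos)
  constructor
  · intro b hb
    obtain ⟨ε, e1, e2, e3⟩ := ((hL.eventually (lt_mem_nhds hb)).and (h1.and self_mem_nhdsWithin)).exists
    have e3 : 0 < ε := e3
    filter_upwards [hmain ε e3 e2] with s hs
    refine e1.trans_le ?_
    rw [div_le_iff₀ (by positivity), mul_comm]
    linarith [hs.2]
  · intro b hb
    obtain ⟨ε, e1, e2, e3⟩ := ((hU.eventually (gt_mem_nhds hb)).and (h1.and self_mem_nhdsWithin)).exists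
    have e3 : 0 < ε := e3
    filter_upwards [hmain ε e3 e2] with s hs
    refine lt_of_le_of_lt ?_ e1
    rw [le_div_iff₀ (by linarith), mul_comm]
    linarith [hs.1]

theorem stmt6 (N : ℕ) (hN : 2 ≤ N) (R₀ R₁ : ℝ) (hR₀ : 0 < R₀) (hR : R₀ < R₁)
    (Λ : ℝ → ℝ)
    (hΛ : ∀ s ∈ Set.Ico 0 (R₁ - R₀),
      Tendsto (fun p : ℝ => lam1 p (Om N R₀ R₁ s)) (nhdsWithin 1 (Set.Ioi 1)) (nhds (Λ s))) :
    ContinuousOn Λ (Set.Ico 0 (R₁ - R₀)) ∧ AntitoneOn Λ (Set.Ico 0 (R₁ - R₀)) ∧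
    ∃ sstar ∈ Set.Ico 0 (R₁ - R₀), Λ 0 = Λ sstar ∧
      ∀ s ∈ Set.Ioo sstar (R₁ - R₀), Λ s < Λ sstar := by
  have hcont := lam_continuousOn hN hR₀ hR Λ hΛ
  have hanti : AntitoneOn Λ (Set.Ico 0 (R₁ - R₀)) := by
    intro s hs t ht hst
    apply le_of_tendsto_of_tendsto (hΛ t ht) (hΛ s hs)
    filter_upwards [self_mem_nhdsWithin] with p hp
    exact lam1_anti hN hR₀ hR hp hs.1 hst
  have h0mem : (0:ℝ) ∈ Set.Ico 0 (R₁ - R₀) := ⟨le_rfl, by linarith⟩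
  have hlow : hC N R₀ R₁ ≤ Λ 0 := by
    have T : Tendsto (fun p : ℝ => hC N R₀ R₁ - (p - 1)) (𝓝[>] 1) (𝓝 (hC N R₀ R₁)) := by
      have : Tendsto (fun p : ℝ => hC N R₀ R₁ - (p - 1)) (𝓝 1) (𝓝 (hC N R₀ R₁ - (1 - 1))) :=
        Continuous.tendsto (by fun_prop) 1
      rw [sub_self, sub_zero] at this
      exact this.mono_left nhdsWithin_le_nhds
    apply le_of_tendsto_of_tendsto T (hΛ 0 h0mem)
    filter_upwards [self_mem_nhdsWithin] with p hp
    exact lam1_lower hN hR₀ hR hp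
  obtain ⟨s₁, hs₁, hlt⟩ := exists_lt hN hR₀ hR Λ hΛ
  refine ⟨hcont, hanti, ?_⟩
  set A := {s | s ∈ Set.Ico 0 (R₁ - R₀) ∧ Λ s = Λ 0} with hA
  have hAne : A.Nonempty := ⟨0, h0mem, rfl⟩
  have hAub : ∀ s ∈ A, s ≤ s₁ := by
    intro s hs
    by_contra hc
    have := hanti hs₁ hs.1 (not_le.1 hc).le
    rw [hs.2] at this
    linarith
  have hbdd : BddAbove A := ⟨s₁, hAub⟩
  set σ := sSup A with hσ
  have hσ0 : 0 ≤ σ := le_csSup hbdd ⟨h0mem, rfl⟩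
  have hσ1 : σ ≤ s₁ := csSup_le hAne hAub
  have hσm : σ ∈ Set.Ico 0 (R₁ - R₀) := ⟨hσ0, hσ1.trans_lt hs₁.2⟩
  have hσcl : σ ∈ closure A := csSup_mem_closure hAne hbdd
  have hΛσ : Λ σ = Λ 0 := by
    have hc := (hcont σ hσm).mono (fun s (hs : s ∈ A) => hs.1)
    have := hc.mem_closure_image hσcl
    have h2 : Λ '' A ⊆ {Λ 0} := by
      rintro _ ⟨s, hs, rfl⟩
      exact hs.2
    exact closure_minimal h2 isClosed_singleton this
  refine ⟨σ, hσm, hΛσ.symm, ?_⟩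
  intro s hs
  have hsm : s ∈ Set.Ico 0 (R₁ - R₀) := ⟨hσ0.trans hs.1.le, hs.2⟩
  refine lt_of_le_of_ne (hanti hσm hsm hs.1.le) ?_
  intro heq
  have : s ≤ σ := le_csSup hbdd ⟨hsm, heq.trans hΛσ⟩
  exact absurd hs.1 (not_lt.2 this)
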